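/- arXiv:1705.01433 — 2 statements merged into one kernel-verified Lean document; each statement's English description precedes it below -/
import Mathlib

section
/- Consider a parity bidding game G = (V, E, p) and a vertex v ∈ V, and write Thresh₁(v) = Thresh(v) and Thresh₂(v) = 1 − Thresh(v). For each i ∈ {1,2}, if Player i's initial budget exceeds Threshᵢ(v), then Player i has a memoryless winning strategy from v, that is, a winning strategy whose bid and chosen move at each round depend only on the current vertex and on Player i's current budget. -/
open scoped Classical

/-! ### Bidding games: the basic model -/

/-- One round of a bidding game: the vertex the token was moved to, the winning bid,
and whether Player 1 won the bidding. -/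
structure BidRound (V : Type) where
  dest : V
  bid : ℝ
  p1Won : Bool

/-- A history: the initial vertex together with the list of rounds played so far. -/
structure Hist (V : Type) where
  init : V
  rounds : List (BidRound V)

/-- The vertex currently occupied by the token. -/
def Hist.cur {V : Type} (h : Hist V) : V :=
  h.rounds.getLast?.elim h.init BidRound.dest

/-- The net payment of Player 1 so far (bids paid upon winning minus bids received). -/
def Hist.pay1 {V : Type} (h : Hist V) : ℝ :=
  (h.rounds.map (fun r => if r.p1Won then r.bid else -r.bid)).sum

/-- The net payment of Player 2 so far. -/
def Hist.pay2 {V : Type} (h : Hist V) : ℝ := -h.pay1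

/-- The sum of the weights of all vertices visited so far (including the current one). -/
def Hist.energyAll {V : Type} (w : V → ℤ) (h : Hist V) : ℤ :=
  w h.init + (h.rounds.map (fun r => w r.dest)).sum

/-- A strategy: maps a history to a bid and the vertex to move to upon winning. -/
def Strat (V : Type) := Hist V → ℝ × V

/-- A tie-breaking mechanism: decides at each history whether Player 1 wins a tie. -/
def TieBreak (V : Type) := Hist V → Bool

/-- A bidding game: a finite directed graph in which every vertex has an outgoing edge. -/
structure BiddingGame (V : Type) [Fintype V] where
  E : V → V → Prop
  total : ∀ v, ∃ u, E v u

/-- One round of play: both players bid; the higher bidder (Player 1 upon a tie won by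
the tie-breaking mechanism) pays his bid to the other player and moves the token. -/
noncomputable def extend {V : Type} (tb : TieBreak V) (f1 f2 : Strat V) (h : Hist V) : Hist V :=
  if (f2 h).1 < (f1 h).1 ∨ ((f1 h).1 = (f2 h).1 ∧ tb h = true) then
    ⟨h.init, h.rounds ++ [⟨(f1 h).2, (f1 h).1, true⟩]⟩
  else
    ⟨h.init, h.rounds ++ [⟨(f2 h).2, (f2 h).1, false⟩]⟩

/-- The history after `n` rounds, starting at `v0`. -/
noncomputable def play {V : Type} (tb : TieBreak V) (f1 f2 : Strat V) (v0 : V) : ℕ → Hist V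
  | 0 => ⟨v0, []⟩
  | n + 1 => extend tb f1 f2 (play tb f1 f2 v0 n)

/-- The vertex occupied after `n` rounds. -/
noncomputable def visit {V : Type} (tb : TieBreak V) (f1 f2 : Strat V) (v0 : V) (n : ℕ) : V :=
  (play tb f1 f2 v0 n).cur

/-- The energy (sum of weights) of the prefix of length `n` of the outcome. -/
noncomputable def energy {V : Type} (w : V → ℤ) (tb : TieBreak V) (f1 f2 : Strat V) (v0 : V)
    (n : ℕ) : ℤ :=
  ∑ i ∈ Finset.range n, w (visit tb f1 f2 v0 i)

/-- Player 1's strategy is legal w.r.t. the initial budget `B`: along any play, his bids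
are nonnegative, never exceed his current budget, and his moves follow edges. -/
def Legal1 {V : Type} [Fintype V] (G : BiddingGame V) (f1 : Strat V) (B : ℝ) : Prop :=
  ∀ (tb : TieBreak V) (f2 : Strat V) (v0 : V) (n : ℕ),
    0 ≤ (f1 (play tb f1 f2 v0 n)).1 ∧
    (f1 (play tb f1 f2 v0 n)).1 ≤ B - (play tb f1 f2 v0 n).pay1 ∧
    G.E (play tb f1 f2 v0 n).cur (f1 (play tb f1 f2 v0 n)).2

/-- Player 2's strategy is legal w.r.t. the initial budget `B`. -/
def Legal2 {V : Type} [Fintype V] (G : BiddingGame V) (f2 : Strat V) (B : ℝ) : Prop :=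
  ∀ (tb : TieBreak V) (f1 : Strat V) (v0 : V) (n : ℕ),
    0 ≤ (f2 (play tb f1 f2 v0 n)).1 ∧
    (f2 (play tb f1 f2 v0 n)).1 ≤ B - (play tb f1 f2 v0 n).pay2 ∧
    G.E (play tb f1 f2 v0 n).cur (f2 (play tb f1 f2 v0 n)).2

/-- A memoryless strategy: its action depends only on the current vertex and the
player's current budget (equivalently, the net payments so far). -/
def Memoryless {V : Type} (f : Strat V) : Prop :=
  ∀ h h' : Hist V, h.cur = h'.cur → h.pay1 = h'.pay1 → f h = f h'

/-- A memoryless strategy in a mean-payoff game: its action depends only on the current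
vertex, the player's current budget, and the current energy level. -/
def MemorylessE {V : Type} (w : V → ℤ) (f : Strat V) : Prop :=
  ∀ h h' : Hist V, h.cur = h'.cur → h.pay1 = h'.pay1 →
    h.energyAll w = h'.energyAll w → f h = f h'

/-- A constant-memory strategy for Player 2 (Max): the action depends only on the current
vertex, Player 2's current budget, the current energy level, and a memory state ranging
over a finite set (of size independent of the history), updated round by round. -/
def FiniteMemory2 {V : Type} (w : V → ℤ) (f : Strat V) (B : ℝ) : Prop :=
  ∃ (M : Type) (_ : Fintype M) (m0 : M) (upd : M → BidRound V → M)
    (act : V → ℝ → ℤ → M → ℝ × V),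
    ∀ h : Hist V, f h = act h.cur (B - h.pay2) (h.energyAll w) (h.rounds.foldl upd m0)

/-- Strong connectivity of the arena. -/
def StronglyConnected {V : Type} [Fintype V] (G : BiddingGame V) : Prop :=
  ∀ v u : V, Relation.ReflTransGen G.E v u

/-! ### Richman games -/

/-- The successors of `v`. -/
noncomputable def BiddingGame.adj {V : Type} [Fintype V] (G : BiddingGame V) (v : V) :
    Finset V :=
  Finset.univ.filter (fun u => G.E v u)

lemma BiddingGame.adj_nonempty {V : Type} [Fintype V] (G : BiddingGame V) (v : V) :
    (G.adj v).Nonempty := by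
  obtain ⟨u, hu⟩ := G.total v
  exact ⟨u, by simpa [BiddingGame.adj] using hu⟩

/-- The Richman function `R(v, i)`. -/
noncomputable def Rfun {V : Type} [Fintype V] (G : BiddingGame V) (vR vS : V) :
    ℕ → V → ℝ
  | 0, v => if v = vR then 0 else 1
  | i + 1, v =>
      if v = vR then 0
      else if v = vS then 1
      else ((G.adj v).sup' (G.adj_nonempty v) (Rfun G vR vS i) +
            (G.adj v).inf' (G.adj_nonempty v) (Rfun G vR vS i)) / 2

/-- The limit Richman function `R(v) = lim_i R(v, i)`; since `i ↦ R(v, i)` is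
nonincreasing, the limit equals the infimum. -/
noncomputable def Rlim {V : Type} [Fintype V] (G : BiddingGame V) (vR vS : V)
    (v : V) : ℝ :=
  ⨅ i : ℕ, Rfun G vR vS i v

/-- Player 1 wins an outcome of a Richman game: `vR` is reached, and `vS` is not
reached before that (the game ends once a target is reached). -/
def Win1Richman {V : Type} (tb : TieBreak V) (f1 f2 : Strat V) (v0 vR vS : V) : Prop :=
  ∃ n, visit tb f1 f2 v0 n = vR ∧ ∀ m < n, visit tb f1 f2 v0 m ≠ vS

/-- Player 2 wins an outcome of a Richman game: `vS` is reached first, or no target is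
ever reached. -/
def Win2Richman {V : Type} (tb : TieBreak V) (f1 f2 : Strat V) (v0 vR vS : V) : Prop :=
  (∃ n, visit tb f1 f2 v0 n = vS ∧ ∀ m < n, visit tb f1 f2 v0 m ≠ vR) ∨
  (∀ n, visit tb f1 f2 v0 n ≠ vR ∧ visit tb f1 f2 v0 n ≠ vS)

/-- Player 1 has a winning strategy in the Richman game from `v0` with budget `B`. -/
def Win1RichmanFrom {V : Type} [Fintype V] (G : BiddingGame V) (vR vS v0 : V)
    (B : ℝ) : Prop :=
  ∀ tb : TieBreak V, ∃ f1 : Strat V, Legal1 G f1 B ∧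
    ∀ f2 : Strat V, Legal2 G f2 (1 - B) → Win1Richman tb f1 f2 v0 vR vS

/-- Player 2 has a winning strategy in the Richman game from `v0` with budget `B`. -/
def Win2RichmanFrom {V : Type} [Fintype V] (G : BiddingGame V) (vR vS v0 : V)
    (B : ℝ) : Prop :=
  ∀ tb : TieBreak V, ∃ f2 : Strat V, Legal2 G f2 B ∧
    ∀ f1 : Strat V, Legal1 G f1 (1 - B) → Win2Richman tb f1 f2 v0 vR vS

/-- `t` is a threshold budget at `v` in the Richman game. -/
def IsThreshRichman {V : Type} [Fintype V] (G : BiddingGame V) (vR vS v : V)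
    (t : ℝ) : Prop :=
  (∀ B : ℝ, B ≤ 1 → t < B → Win1RichmanFrom G vR vS v B) ∧
  (∀ B : ℝ, B ≤ 1 → 1 - t < B → Win2RichmanFrom G vR vS v B)

/-! ### Richman games with target sets -/

def Win1RichmanSet {V : Type} (tb : TieBreak V) (f1 f2 : Strat V) (v0 : V)
    (R S : Set V) : Prop :=
  ∃ n, visit tb f1 f2 v0 n ∈ R ∧ ∀ m < n, visit tb f1 f2 v0 m ∉ S

def Win2RichmanSet {V : Type} (tb : TieBreak V) (f1 f2 : Strat V) (v0 : V)
    (R S : Set V) : Prop :=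
  (∃ n, visit tb f1 f2 v0 n ∈ S ∧ ∀ m < n, visit tb f1 f2 v0 m ∉ R) ∨
  (∀ n, visit tb f1 f2 v0 n ∉ R ∧ visit tb f1 f2 v0 n ∉ S)

/-- `t` is a threshold budget at `v` in the Richman game with target sets `R` and `S`. -/
def IsThreshRichmanSet {V : Type} [Fintype V] (G : BiddingGame V) (R S : Set V)
    (v : V) (t : ℝ) : Prop :=
  (∀ B : ℝ, B ≤ 1 → t < B → ∀ tb : TieBreak V, ∃ f1 : Strat V, Legal1 G f1 B ∧
      ∀ f2 : Strat V, Legal2 G f2 (1 - B) → Win1RichmanSet tb f1 f2 v R S) ∧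
  (∀ B : ℝ, B ≤ 1 → 1 - t < B → ∀ tb : TieBreak V, ∃ f2 : Strat V, Legal2 G f2 B ∧
      ∀ f1 : Strat V, Legal1 G f1 (1 - B) → Win2RichmanSet tb f1 f2 v R S)

/-! ### Reachability games -/

/-- `t` is a threshold budget at `v` in the reachability game with target set `T`. -/
def IsThreshReach {V : Type} [Fintype V] (G : BiddingGame V) (T : Set V) (v : V)
    (t : ℝ) : Prop :=
  (∀ B : ℝ, B ≤ 1 → t < B → ∀ tb : TieBreak V, ∃ f1 : Strat V, Legal1 G f1 B ∧
      ∀ f2 : Strat V, Legal2 G f2 (1 - B) → ∃ n, visit tb f1 f2 v n ∈ T) ∧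
  (∀ B : ℝ, B ≤ 1 → 1 - t < B → ∀ tb : TieBreak V, ∃ f2 : Strat V, Legal2 G f2 B ∧
      ∀ f1 : Strat V, Legal1 G f1 (1 - B) → ∀ n, visit tb f1 f2 v n ∉ T)

/-! ### Parity games -/

/-- Player 1 wins an outcome of a parity game: the maximal parity index visited
infinitely often is odd. -/
def Win1Parity {V : Type} (p : V → ℕ) (tb : TieBreak V) (f1 f2 : Strat V)
    (v0 : V) : Prop :=
  Odd (sSup {k : ℕ | ∀ N : ℕ, ∃ n ≥ N, p (visit tb f1 f2 v0 n) = k})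

def Win1ParityFrom {V : Type} [Fintype V] (G : BiddingGame V) (p : V → ℕ) (v0 : V)
    (B : ℝ) : Prop :=
  ∀ tb : TieBreak V, ∃ f1 : Strat V, Legal1 G f1 B ∧
    ∀ f2 : Strat V, Legal2 G f2 (1 - B) → Win1Parity p tb f1 f2 v0

def Win2ParityFrom {V : Type} [Fintype V] (G : BiddingGame V) (p : V → ℕ) (v0 : V)
    (B : ℝ) : Prop :=
  ∀ tb : TieBreak V, ∃ f2 : Strat V, Legal2 G f2 B ∧
    ∀ f1 : Strat V, Legal1 G f1 (1 - B) → ¬ Win1Parity p tb f1 f2 v0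

/-- `t` is a threshold budget at `v` in the parity game. -/
def IsThreshParity {V : Type} [Fintype V] (G : BiddingGame V) (p : V → ℕ) (v : V)
    (t : ℝ) : Prop :=
  (∀ B : ℝ, B ≤ 1 → t < B → Win1ParityFrom G p v B) ∧
  (∀ B : ℝ, B ≤ 1 → 1 - t < B → Win2ParityFrom G p v B)

/-! ### Mean-payoff games (Min is Player 1, Max is Player 2) -/

/-- The mean-payoff value of the outcome. -/
noncomputable def mpval {V : Type} (w : V → ℤ) (tb : TieBreak V) (f1 f2 : Strat V)
    (v0 : V) : ℝ :=
  Filter.liminf (fun n : ℕ => (energy w tb f1 f2 v0 n : ℝ) / n) Filter.atTop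

/-- Min can guarantee a nonpositive mean-payoff value from `v0` with budget `B`. -/
def MinWinsFrom {V : Type} [Fintype V] (G : BiddingGame V) (w : V → ℤ) (v0 : V)
    (B : ℝ) : Prop :=
  ∀ tb : TieBreak V, ∃ f1 : Strat V, Legal1 G f1 B ∧
    ∀ f2 : Strat V, Legal2 G f2 (1 - B) → mpval w tb f1 f2 v0 ≤ 0

/-- Max can guarantee a strictly positive mean-payoff value from `v0` with budget `B`. -/
def MaxWinsFrom {V : Type} [Fintype V] (G : BiddingGame V) (w : V → ℤ) (v0 : V)
    (B : ℝ) : Prop :=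
  ∀ tb : TieBreak V, ∃ f2 : Strat V, Legal2 G f2 B ∧
    ∀ f1 : Strat V, Legal1 G f1 (1 - B) → 0 < mpval w tb f1 f2 v0

/-- `t` is a threshold budget at `v` in the mean-payoff game. -/
def IsThreshMP {V : Type} [Fintype V] (G : BiddingGame V) (w : V → ℤ) (v : V)
    (t : ℝ) : Prop :=
  (∀ B : ℝ, B ≤ 1 → t < B → MinWinsFrom G w v B) ∧
  (∀ B : ℝ, B ≤ 1 → 1 - t < B → MaxWinsFrom G w v B)

/-! ### The split graph `G^u` and the weighted Richman function -/

/-- Edges of `G^u`: `u` is split into `u_s = Sum.inl u` (keeping the outgoing edges of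
`u`, with no incoming edges) and `u_t = Sum.inr ()` (receiving the edges into `u`, with
no outgoing edges). -/
def splitE {V : Type} [Fintype V] (G : BiddingGame V) (u : V) :
    V ⊕ Unit → V ⊕ Unit → Prop
  | Sum.inl v, Sum.inl x => G.E v x ∧ x ≠ u
  | Sum.inl v, Sum.inr _ => G.E v u
  | Sum.inr _, _ => False

/-- The successors in `G^u` of a vertex `v ∈ V` (i.e. of `Sum.inl v`). -/
noncomputable def succu {V : Type} [Fintype V] (G : BiddingGame V) (u v : V) :
    Finset (V ⊕ Unit) :=
  Finset.univ.filter (fun y => splitE G u (Sum.inl v) y)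

lemma succu_nonempty {V : Type} [Fintype V] (G : BiddingGame V) (u v : V) :
    (succu G u v).Nonempty := by
  obtain ⟨x, hx⟩ := G.total v
  by_cases hxu : x = u
  · refine ⟨Sum.inr (), ?_⟩
    simp only [succu, Finset.mem_filter, Finset.mem_univ, true_and]
    exact show G.E v u from hxu ▸ hx
  · refine ⟨Sum.inl x, ?_⟩
    simp only [succu, Finset.mem_filter, Finset.mem_univ, true_and]
    exact show G.E v x ∧ x ≠ u from ⟨hx, hxu⟩

/-- `W(v⁺)`: the maximal value of `W` over the `G^u`-successors of `v`. -/
noncomputable def supWu {V : Type} [Fintype V] (G : BiddingGame V) (u : V)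
    (W : V ⊕ Unit → ℝ) (v : V) : ℝ :=
  (succu G u v).sup' (succu_nonempty G u v) W

/-- `W(v⁻)`: the minimal value of `W` over the `G^u`-successors of `v`. -/
noncomputable def infWu {V : Type} [Fintype V] (G : BiddingGame V) (u : V)
    (W : V ⊕ Unit → ℝ) (v : V) : ℝ :=
  (succu G u v).inf' (succu_nonempty G u v) W

/-- `W` is a weighted Richman function for the weights `w`, split at `u`:
`W(u_t) = 0` and `W(v) = (W(v⁺) + W(v⁻))/2 + w(v)` for every `v ∈ V`
(`Sum.inl v` represents `v`, in particular `Sum.inl u` is `u_s`). -/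
def IsWRichman {V : Type} [Fintype V] (G : BiddingGame V) (w : V → ℝ) (u : V)
    (W : V ⊕ Unit → ℝ) : Prop :=
  W (Sum.inr ()) = 0 ∧
  ∀ v : V, W (Sum.inl v) = (supWu G u W v + infWu G u W v) / 2 + w v

/-- Projection of `G^u`-vertices back to vertices of `G`. -/
def projU {V : Type} (u : V) : V ⊕ Unit → V := Sum.elim id (fun _ => u)

/-- `w_M`: the maximal absolute value of `W` over `V`. -/
noncomputable def wMax {V : Type} [Fintype V] (W : V ⊕ Unit → ℝ) (u : V) : ℝ :=
  Finset.univ.sup' ⟨u, Finset.mem_univ u⟩ (fun v : V => |W (Sum.inl v)|)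

/-- `b_M`: the maximal value of the bid `(W(v⁺) − W(v⁻))/2` over `V`. -/
noncomputable def bMax {V : Type} [Fintype V] (G : BiddingGame V) (u : V)
    (W : V ⊕ Unit → ℝ) : ℝ :=
  Finset.univ.sup' ⟨u, Finset.mem_univ u⟩
    (fun v : V => (supWu G u W v - infWu G u W v) / 2)

/-!
For a potential `T` satisfying the Richman equation `T v = (T v⁻ + T v⁺) / 2`, where `v⁻` and `v⁺`
are successors of `v` with the lowest and highest potential, a player who bids `T v - T v⁻` and
moves to `v⁻` upon winning keeps the surplus `budget - T v` from decreasing. If he also bids a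
fraction of the surplus that decays geometrically in the distance from a target `U` along such
moves, then a suitably weighted surplus grows by a constant factor in every round outside `U`; as
budgets are bounded by `1`, he visits `U` infinitely often. The bid depends only on the vertex and
the budget.

In a bottom strongly connected component, visiting a vertex of maximal parity index infinitely
often decides the parity condition. So take for `T` a Richman potential which is `0` on the bottom
components with odd maximal index and `1` on the others. The above then applies to `T` for Player 1
and to `1 - T` for Player 2, and this makes `T` the threshold.
-/

open Filter Relation

/-! ### Bottom components of a graph -/

section BottomComponents

variable {V ι : Type*} {E : V → V → Prop}

/-- `v` lies in a bottom strongly connected component of the graph `E`. -/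
def IsBottom (E : V → V → Prop) (v : V) : Prop :=
  ∀ w, ReflTransGen E v w → ReflTransGen E w v

lemma IsBottom.of_reflTransGen {v w : V} (hv : IsBottom E v) (hvw : ReflTransGen E v w) :
    IsBottom E w :=
  fun x hwx => (hv x (hvw.trans hwx)).trans hvw

lemma exists_isBottom [Finite V] (E : V → V → Prop) (v : V) :
    ∃ u, ReflTransGen E v u ∧ IsBottom E u := by
  obtain ⟨u, hvu, hmin⟩ := Set.Finite.exists_minimalFor
    (fun u => {w | ReflTransGen E u w}) {u | ReflTransGen E v u} (Set.toFinite _) ⟨v, .refl⟩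
  refine ⟨u, hvu, fun w huw => ?_⟩
  exact hmin (ReflTransGen.trans hvu huw) (fun x hwx => huw.trans hwx) ReflTransGen.refl

/-- `v` has the largest index within a bottom strongly connected component of `E`, the vertices
being indexed by `p`. -/
def IsBottomMax [LE ι] (E : V → V → Prop) (p : V → ι) (v : V) : Prop :=
  IsBottom E v ∧ ∀ w, ReflTransGen E v w → p w ≤ p v

lemma exists_isBottomMax [Finite V] [LinearOrder ι] (E : V → V → Prop) (p : V → ι) (v : V) :
    ∃ u, ReflTransGen E v u ∧ IsBottomMax E p u := by
  obtain ⟨y, hvy, hy⟩ := exists_isBottom E v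
  obtain ⟨u, hyu, hmax⟩ :=
    Set.exists_max_image {u | ReflTransGen E y u} p (Set.toFinite _) ⟨y, .refl⟩
  exact ⟨u, hvy.trans hyu, hy.of_reflTransGen hyu,
    fun w huw => hmax w (ReflTransGen.trans hyu huw)⟩

lemma IsBottomMax.index_eq [PartialOrder ι] {p : V → ι} {u v : V} (hu : IsBottomMax E p u)
    (hv : IsBottomMax E p v) (huv : ReflTransGen E u v) : p u = p v :=
  le_antisymm (hv.2 u (hu.1 v huv)) (hu.2 v huv)

section LimitIndex

variable [ConditionallyCompleteLattice ι] {p : V → ι} {x : ℕ → V}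

lemma IsBottomMax.isGreatest_frequently {m : ℕ} (hm : IsBottomMax E p (x m))
    (hx : ∀ n, E (x n) (x (n + 1))) (hfreq : ∃ᶠ n in atTop, IsBottomMax E p (x n)) :
    IsGreatest {k | ∃ᶠ n in atTop, p (x n) = k} (p (x m)) := by
  have hreach : ∀ n, m ≤ n → ReflTransGen E (x m) (x n) := fun _ hmn =>
    Nat.rel_of_forall_rel_succ_of_le (ReflTransGen E) (fun i => .single (hx i)) hmn
  constructor
  · refine (hfreq.and_eventually (eventually_ge_atTop m)).mono fun n hn => ?_
    exact (hm.index_eq hn.1 (hreach n hn.2)).symm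
  · intro k hk
    obtain ⟨n, rfl, hn⟩ := (hk.and_eventually (eventually_ge_atTop m)).exists
    exact hm.2 _ (hreach n hn)

lemma sSup_frequently_index_of_frequently_isBottomMax {q : ι → Prop}
    (hx : ∀ n, E (x n) (x (n + 1)))
    (hfreq : ∃ᶠ n in atTop, IsBottomMax E p (x n) ∧ q (p (x n))) :
    q (sSup {k | ∃ᶠ n in atTop, p (x n) = k}) := by
  obtain ⟨m, hm, hq⟩ := hfreq.exists
  rwa [(hm.isGreatest_frequently hx (hfreq.mono fun _ h => h.1)).csSup_eq]

end LimitIndex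

/-- The supremum of the indices reachable from `v`. It is constant on bottom components, where it
is the index that matters for the parity condition. -/
def reachIndex [SupSet ι] (E : V → V → Prop) (p : V → ι) (v : V) : ι :=
  sSup (p '' {w | ReflTransGen E v w})

lemma IsBottom.reachIndex_eq [SupSet ι] {v w : V} (hv : IsBottom E v) (p : V → ι)
    (hvw : ReflTransGen E v w) : reachIndex E p w = reachIndex E p v := by
  have heq : {x | ReflTransGen E w x} = {x | ReflTransGen E v x} :=
    Set.Subset.antisymm (fun _ hx => hvw.trans hx) (fun _ hx => (hv w hvw).trans hx)
  rw [reachIndex, reachIndex, heq]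

lemma IsBottomMax.reachIndex_eq [ConditionallyCompleteLattice ι] {p : V → ι} {v : V}
    (hv : IsBottomMax E p v) : reachIndex E p v = p v :=
  IsGreatest.csSup_eq ⟨⟨v, .refl, rfl⟩, Set.forall_mem_image.2 hv.2⟩

end BottomComponents

/-! ### Distances to a target -/

section Distance

variable {V : Type*} {A : V → V → Prop} {U : Set V}

/-- `U` can be reached from the given vertex by a path of exactly `n` edges of `A`. -/
def ReachesIn (A : V → V → Prop) (U : Set V) : ℕ → V → Prop
  | 0, v => v ∈ U
  | n + 1, v => ∃ w, A v w ∧ ReachesIn A U n w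

lemma exists_reachesIn {v u : V} (hvu : ReflTransGen A v u) (hu : u ∈ U) :
    ∃ n, ReachesIn A U n v := by
  induction hvu using ReflTransGen.head_induction_on with
  | refl => exact ⟨0, hu⟩
  | head hvw _ ih =>
    obtain ⟨n, hn⟩ := ih
    exact ⟨n + 1, _, hvw, hn⟩

lemma exists_depth (A : V → V → Prop) (U : Set V) :
    ∃ d : V → ℕ, ∀ v u, ReflTransGen A v u → u ∈ U → v ∉ U → ∃ w, A v w ∧ d w < d v := by
  refine ⟨fun v => sInf {n | ReachesIn A U n v}, fun v u hvu hu hv => ?_⟩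
  have hshortest : ReachesIn A U (sInf {n | ReachesIn A U n v}) v :=
    Nat.sInf_mem (exists_reachesIn hvu hu)
  beta_reduce
  generalize sInf {n | ReachesIn A U n v} = n at hshortest ⊢
  match n, hshortest with
  | 0, hmem => exact absurd hmem hv
  | n + 1, ⟨w, hvw, hw⟩ => exact ⟨w, hvw, Nat.lt_succ_of_le (Nat.sInf_le hw)⟩

end Distance

/-! ### Richman plans -/

/-- The fraction of the surplus that is bid at distance `k` from the target. -/
noncomputable def surplusRate (k : ℕ) : ℝ := (1 / 4) ^ k / 2

lemma surplusRate_pos (k : ℕ) : 0 < surplusRate k := by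
  unfold surplusRate
  positivity

lemma surplusRate_succ (k : ℕ) : surplusRate (k + 1) = surplusRate k / 4 := by
  unfold surplusRate
  ring

lemma surplusRate_antitone : Antitone surplusRate :=
  antitone_nat_of_succ_le fun k => by linarith [surplusRate_succ k, surplusRate_pos k]

lemma surplusRate_le_half (k : ℕ) : surplusRate k ≤ 1 / 2 := by
  simpa [surplusRate] using surplusRate_antitone (Nat.zero_le k)

lemma mul_surplusRate_le_of_lt {l k D : ℕ} (hlk : l < k) (hkD : k ≤ D) :
    (1 + surplusRate D) * (1 + surplusRate k) ≤ (1 - surplusRate k) * (1 + surplusRate l) := by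
  have hpos := surplusRate_pos k
  have hl : 4 * surplusRate k ≤ surplusRate l := by
    linarith [surplusRate_antitone (Nat.succ_le_of_lt hlk), surplusRate_succ l]
  have hk : surplusRate k ≤ 1 / 8 := by linarith [surplusRate_le_half l]
  calc (1 + surplusRate D) * (1 + surplusRate k)
      ≤ (1 + surplusRate k) * (1 + surplusRate k) := by
        gcongr
        exact surplusRate_antitone hkD
    _ ≤ (1 - surplusRate k) * (1 + 4 * surplusRate k) := by nlinarith
    _ ≤ (1 - surplusRate k) * (1 + surplusRate l) := by
        gcongr
        linarith

/-- A way of playing so as to visit the target `U` infinitely often, with potential `T`: `next`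
chooses a successor of lowest potential, and wherever `T` is below `1`, it descends in `depth` until
`U` is reached. The bound `add_next_le` is what the Richman equation gives: no move raises the
potential by more than `next` lowers it. -/
structure RichmanPlan {V : Type*} (E : V → V → Prop) (T : V → ℝ) (U : Set V) where
  next : V → V
  depth : V → ℕ
  nonneg : ∀ v, 0 ≤ T v
  edge_next : ∀ v, E v (next v)
  add_next_le : ∀ v w, E v w → T w + T (next v) ≤ 2 * T v
  depth_next_lt : ∀ v, T v < 1 → v ∉ U → depth (next v) < depth v

namespace RichmanPlan

variable {V : Type*} {E : V → V → Prop} {T : V → ℝ} {U : Set V} (P : RichmanPlan E T U)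

/-- The bid at vertex `v` with budget `β`: the drop of the potential along `next`, which alone keeps
the surplus `β - T v` from decreasing, plus a fraction of the surplus. Without a positive surplus
the plan does not bid. -/
noncomputable def bid (v : V) (β : ℝ) : ℝ :=
  if T v < β then T v - T (P.next v) + surplusRate (P.depth v) * (β - T v) else 0

lemma bid_of_lt {v : V} {β : ℝ} (hβ : T v < β) :
    P.bid v β = T v - T (P.next v) + surplusRate (P.depth v) * (β - T v) := if_pos hβ

lemma bid_nonneg (v : V) (β : ℝ) : 0 ≤ P.bid v β := by
  rcases lt_or_ge (T v) β with hβ | hβ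
  · have hdrop := P.add_next_le v (P.next v) (P.edge_next v)
    have := mul_pos (surplusRate_pos (P.depth v)) (sub_pos.2 hβ)
    rw [P.bid_of_lt hβ]
    linarith
  · exact (if_neg hβ.not_gt).ge

lemma bid_le {v : V} {β : ℝ} (hβ : 0 ≤ β) : P.bid v β ≤ β := by
  rcases lt_or_ge (T v) β with hlt | hge
  · rw [P.bid_of_lt hlt]
    nlinarith [surplusRate_le_half (P.depth v), P.nonneg (P.next v)]
  · exact (if_neg hge.not_gt).trans_le hβ

/-- A round from vertex `v` with budget `β` to vertex `w` with budget `γ`, in which the player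
bids according to the plan: he either wins and pays his bid, or the opponent wins and pays him at
least as much. -/
def Round (v : V) (β : ℝ) (w : V) (γ : ℝ) : Prop :=
  (w = P.next v ∧ γ = β - P.bid v β) ∨ (E v w ∧ β + P.bid v β ≤ γ)

/-- The surplus `β - T v`, weighted so as to reward proximity to the target: descending in depth
upon winning a bidding makes up for the fraction of the surplus that was paid. -/
noncomputable def weightedSurplus (v : V) (β : ℝ) : ℝ :=
  (1 + surplusRate (P.depth v)) * (β - T v)

variable {P}

namespace Round

variable {v w : V} {β γ : ℝ}

lemma edge (h : P.Round v β w γ) : E v w := by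
  rcases h with ⟨rfl, -⟩ | ⟨hvw, -⟩
  · exact P.edge_next v
  · exact hvw

lemma surplus (h : P.Round v β w γ) (hβ : T v < β) :
    (w = P.next v ∧ (1 - surplusRate (P.depth v)) * (β - T v) = γ - T w) ∨
      (1 + surplusRate (P.depth v)) * (β - T v) ≤ γ - T w := by
  rcases h with ⟨rfl, rfl⟩ | ⟨hvw, hγ⟩
  · refine Or.inl ⟨rfl, ?_⟩
    rw [P.bid_of_lt hβ]
    ring
  · refine Or.inr ?_
    rw [P.bid_of_lt hβ] at hγ
    linarith [P.add_next_le v w hvw]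

lemma potential_lt (h : P.Round v β w γ) (hβ : T v < β) : T w < γ := by
  have hs : 0 < β - T v := sub_pos.2 hβ
  rcases h.surplus hβ with ⟨-, hwin⟩ | hlose
  · nlinarith [hs, surplusRate_le_half (P.depth v)]
  · nlinarith [hs, surplusRate_pos (P.depth v)]

lemma mul_weightedSurplus_le {D : ℕ} (h : P.Round v β w γ) (hβ : T v < β) (hT : T v < 1)
    (hU : v ∉ U) (hv : P.depth v ≤ D) (hw : P.depth w ≤ D) :
    (1 + surplusRate D) * P.weightedSurplus v β ≤ P.weightedSurplus w γ := by
  have hs : 0 ≤ β - T v := (sub_pos.2 hβ).le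
  have hweight := surplusRate_pos (P.depth w)
  unfold weightedSurplus
  rcases h.surplus hβ with ⟨rfl, hwin⟩ | hlose
  · calc (1 + surplusRate D) * ((1 + surplusRate (P.depth v)) * (β - T v))
        = (1 + surplusRate D) * (1 + surplusRate (P.depth v)) * (β - T v) := (mul_assoc _ _ _).symm
      _ ≤ (1 - surplusRate (P.depth v)) * (1 + surplusRate (P.depth (P.next v))) * (β - T v) :=
          mul_le_mul_of_nonneg_right
            (mul_surplusRate_le_of_lt (P.depth_next_lt v hT hU) hv) hs
      _ = (1 + surplusRate (P.depth (P.next v))) * (γ - T (P.next v)) := by rw [← hwin]; ring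
  · exact mul_le_mul (by linarith [surplusRate_antitone hw]) hlose
      (mul_nonneg (by linarith [surplusRate_pos (P.depth v)]) hs) (by linarith)

end Round

theorem frequently_mem_of_round [Finite V] {x : ℕ → V} {β : ℕ → ℝ}
    (hround : ∀ n, P.Round (x n) (β n) (x (n + 1)) (β (n + 1))) (h0 : T (x 0) < β 0)
    (hβ : ∀ n, β n ≤ 1) : ∃ᶠ n in atTop, x n ∈ U := by
  have hlt : ∀ n, T (x n) < β n := fun n =>
    Nat.rec h0 (fun n ih => (hround n).potential_lt ih) n
  refine frequently_atTop.2 fun N => ?_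
  by_contra! hU
  obtain ⟨D, hD⟩ : ∃ D, ∀ v, P.depth v ≤ D :=
    (Set.finite_range P.depth).bddAbove.imp fun D hD v => hD ⟨v, rfl⟩
  set Q : ℕ → ℝ := fun n => P.weightedSurplus (x (N + n)) (β (N + n)) with hQ
  have hgrow : ∀ n, (1 + surplusRate D) * Q n ≤ Q (n + 1) := fun n =>
    (hround (N + n)).mul_weightedSurplus_le (hlt _) ((hlt _).trans_le (hβ _))
      (hU _ (Nat.le_add_right N n)) (hD _) (hD _)
  have hpos : 0 < Q 0 :=
    mul_pos (by linarith [surplusRate_pos (P.depth (x (N + 0)))]) (sub_pos.2 (hlt _))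
  have hbound : ∀ n, Q n ≤ 2 := fun n => by
    simp only [hQ, weightedSurplus]
    nlinarith [surplusRate_pos (P.depth (x (N + n))), surplusRate_le_half (P.depth (x (N + n))),
      hβ (N + n), P.nonneg (x (N + n)), hlt (N + n)]
  obtain ⟨n, hn⟩ := ((tendsto_atTop_of_geom_le hpos (by linarith [surplusRate_pos D])
    hgrow).eventually_gt_atTop 2).exists
  exact hn.not_ge (hbound n)

end RichmanPlan

/-! ### Richman potentials -/

section Potential

variable {V : Type*} {E : V → V → Prop} {T : V → ℝ}

/-- `w` is a successor of `v` of lowest potential. -/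
def IsLowestSucc (E : V → V → Prop) (T : V → ℝ) (v w : V) : Prop :=
  E v w ∧ ∀ u, E v u → T w ≤ T u

/-- `T` satisfies the Richman equation: `T v` is the mean of the lowest and the highest value of `T`
on the successors of `v`. -/
def IsRichmanPotential (E : V → V → Prop) (T : V → ℝ) : Prop :=
  ∀ v, ∃ l h, IsLowestSucc E T v l ∧ (E v h ∧ ∀ u, E v u → T u ≤ T h) ∧ T v = (T l + T h) / 2

namespace IsRichmanPotential

lemma one_sub (hT : IsRichmanPotential E T) : IsRichmanPotential E (fun v => 1 - T v) := by
  intro v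
  obtain ⟨l, h, ⟨hl, hlow⟩, ⟨hh, hhigh⟩, hmean⟩ := hT v
  exact ⟨h, l, ⟨hh, fun u hu => sub_le_sub_left (hhigh u hu) 1⟩,
    ⟨hl, fun u hu => sub_le_sub_left (hlow u hu) 1⟩, by linarith⟩

lemma add_le_two_mul (hT : IsRichmanPotential E T) {v w u : V} (hw : IsLowestSucc E T v w)
    (hu : E v u) : T u + T w ≤ 2 * T v := by
  obtain ⟨l, h, ⟨hl, -⟩, ⟨-, hhigh⟩, hmean⟩ := hT v
  linarith [hw.2 l hl, hhigh u hu]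

lemma eq_of_forall_le (hT : IsRichmanPotential E T) {v w : V} (hv : ∀ u, E v u → T v ≤ T u)
    (hw : E v w) : T w = T v := by
  obtain ⟨l, h, ⟨hl, -⟩, ⟨-, hhigh⟩, hmean⟩ := hT v
  linarith [hv l hl, hv w hw, hhigh w hw, hhigh l hl]

/-- Lowest-successor moves lead to a vertex `x` where the potential is minimal among the vertices
reachable by such moves. From there on all edges preserve the potential, hence are such moves. -/
lemma exists_reflTransGen_isLowestSucc [Finite V] (hT : IsRichmanPotential E T) {U : Set V}
    (hU : ∀ v, ∃ u, ReflTransGen E v u ∧ (u ∈ U ∨ T u = 1)) {v : V} (hv : T v < 1) :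
    ∃ u ∈ U, ReflTransGen (IsLowestSucc E T) v u := by
  obtain ⟨x, hvx, hmin⟩ := Set.exists_min_image {x | ReflTransGen (IsLowestSucc E T) v x} T
    (Set.toFinite _) ⟨v, .refl⟩
  have hkeep : ∀ u, ReflTransGen E x u → ReflTransGen (IsLowestSucc E T) v u ∧ T u = T x := by
    intro u hxu
    induction hxu with
    | refl => exact ⟨hvx, rfl⟩
    | @tail y z _ hyz ih =>
      obtain ⟨hvy, hy⟩ := ih
      have hlow : ∀ u, E y u → T y ≤ T u := by
        obtain ⟨l, -, hl, -⟩ := hT y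
        exact fun u hu => hy ▸ (hmin l (hvy.tail hl)).trans (hl.2 u hu)
      have hz : T z = T y := hT.eq_of_forall_le hlow hyz
      exact ⟨hvy.tail ⟨hyz, fun u hu => hz ▸ hlow u hu⟩, hz.trans hy⟩
  obtain ⟨u, hxu, hu⟩ := hU x
  obtain ⟨hvu, hTu⟩ := hkeep u hxu
  refine ⟨u, hu.resolve_right fun h1 => ?_, hvu⟩
  linarith [hmin v .refl]

theorem nonempty_richmanPlan [Finite V] (hT : IsRichmanPotential E T) (hnonneg : ∀ v, 0 ≤ T v)
    {U : Set V} (hU : ∀ v, ∃ u, ReflTransGen E v u ∧ (u ∈ U ∨ T u = 1)) :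
    Nonempty (RichmanPlan E T U) := by
  obtain ⟨d, hd⟩ := exists_depth (IsLowestSucc E T) U
  have hnext : ∀ v, ∃ w, IsLowestSucc E T v w ∧ (T v < 1 → v ∉ U → d w < d v) := by
    intro v
    by_cases hv : T v < 1 ∧ v ∉ U
    · obtain ⟨u, hu, hvu⟩ := hT.exists_reflTransGen_isLowestSucc hU hv.1
      obtain ⟨w, hvw, hdw⟩ := hd v u hvu hu hv.2
      exact ⟨w, hvw, fun _ _ => hdw⟩
    · obtain ⟨l, -, hl, -⟩ := hT v
      exact ⟨l, hl, fun h1 h2 => absurd ⟨h1, h2⟩ hv⟩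
  choose next hlow hdepth using hnext
  exact ⟨next, d, hnonneg, fun v => (hlow v).1, fun v w => hT.add_le_two_mul (hlow v), hdepth⟩

end IsRichmanPotential

end Potential

section RichmanStep

variable {V : Type} [Fintype V]

/-- The operator averaging the lowest and the highest value on the successors of each vertex outside
`S`, with boundary values `g` on `S`. -/
noncomputable def richmanStep (G : BiddingGame V) (S : Set V) (g : V → unitInterval) :
    (V → unitInterval) →o (V → unitInterval) where
  toFun T v := if v ∈ S then g v else
    ⟨((G.adj v).inf' (G.adj_nonempty v) T + (G.adj v).sup' (G.adj_nonempty v) T : ℝ) / 2,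
      by
        constructor <;> linarith [unitInterval.nonneg ((G.adj v).inf' (G.adj_nonempty v) T),
          unitInterval.le_one ((G.adj v).inf' (G.adj_nonempty v) T),
          unitInterval.nonneg ((G.adj v).sup' (G.adj_nonempty v) T),
          unitInterval.le_one ((G.adj v).sup' (G.adj_nonempty v) T)]⟩
  monotone' T T' hTT' v := by
    dsimp only
    split_ifs
    · exact le_rfl
    · have hinf : (G.adj v).inf' (G.adj_nonempty v) T ≤ (G.adj v).inf' (G.adj_nonempty v) T' :=
        Finset.inf'_mono_fun fun w _ => hTT' w
      have hsup : (G.adj v).sup' (G.adj_nonempty v) T ≤ (G.adj v).sup' (G.adj_nonempty v) T' :=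
        Finset.sup'_mono_fun fun w _ => hTT' w
      exact Subtype.mk_le_mk.2 (by gcongr)

lemma exists_isRichmanPotential_eqOn (G : BiddingGame V) {S : Set V} {g : V → unitInterval}
    (hS : ∀ v ∈ S, ∀ w, G.E v w → w ∈ S ∧ g w = g v) :
    ∃ T : V → unitInterval, IsRichmanPotential G.E (fun v => T v) ∧ Set.EqOn T g S := by
  set T := (richmanStep G S g).lfp
  have hfix : ∀ v, T v = richmanStep G S g T v := fun v =>
    (congrFun (richmanStep G S g).map_lfp v).symm
  have hTg : Set.EqOn T g S := fun v hv => (hfix v).trans (if_pos hv)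
  refine ⟨T, fun v => ?_, hTg⟩
  have hadj : ∀ w, w ∈ G.adj v ↔ G.E v w := fun w => by simp [BiddingGame.adj]
  by_cases hv : v ∈ S
  · obtain ⟨u, hu⟩ := G.total v
    have hconst : ∀ w, G.E v w → T w = T v := fun w hw => by
      rw [hTg (hS v hv w hw).1, (hS v hv w hw).2, hTg hv]
    have hsame : ∀ w, G.E v w → T w = T u := fun w hw => (hconst w hw).trans (hconst u hu).symm
    exact ⟨u, u, ⟨hu, fun w hw => (hsame w hw).ge⟩, ⟨hu, fun w hw => (hsame w hw).le⟩,
      by simp only [hconst u hu, add_self_div_two]⟩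
  · obtain ⟨l, hl, hinf⟩ := Finset.exists_mem_eq_inf' (G.adj_nonempty v) T
    obtain ⟨h, hh, hsup⟩ := Finset.exists_mem_eq_sup' (G.adj_nonempty v) T
    have hlow : ∀ u, G.E v u → T l ≤ T u := fun u hu =>
      hinf ▸ Finset.inf'_le T ((hadj u).2 hu)
    have hhigh : ∀ u, G.E v u → T u ≤ T h := fun u hu =>
      hsup ▸ Finset.le_sup' T ((hadj u).2 hu)
    have hmean : (T v : ℝ) = (T l + T h) / 2 := by
      rw [hfix v, ← hinf, ← hsup]
      exact congrArg Subtype.val (if_neg hv)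
    exact ⟨l, h, ⟨(hadj l).1 hl, hlow⟩, ⟨(hadj h).1 hh, hhigh⟩, hmean⟩

lemma exists_isRichmanPotential_parity (G : BiddingGame V) (p : V → ℕ) :
    ∃ T : V → unitInterval, IsRichmanPotential G.E (fun v => T v) ∧
      ∀ u, IsBottomMax G.E p u → T u = if Odd (p u) then 0 else 1 := by
  obtain ⟨T, hT, hTg⟩ := exists_isRichmanPotential_eqOn G (S := {v | IsBottom G.E v})
    (g := fun v => if Odd (reachIndex G.E p v) then 0 else 1) fun v hv w hvw =>
      ⟨hv.of_reflTransGen (.single hvw), by rw [hv.reachIndex_eq p (.single hvw)]⟩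
  exact ⟨T, hT, fun u hu => (hTg hu.1).trans (by simp only [hu.reachIndex_eq])⟩

end RichmanStep

/-! ### Exchanging the players -/

section Swap

variable {V : Type}

/-- The history in which the players have exchanged their roles. -/
def Hist.swap (h : Hist V) : Hist V :=
  ⟨h.init, h.rounds.map fun r => ⟨r.dest, r.bid, !r.p1Won⟩⟩

/-- The same strategy used by the other player. -/
def Strat.swap (f : Strat V) : Strat V := fun h => f h.swap

/-- The tie-breaking mechanism in which the players have exchanged their roles. -/
def TieBreak.swap (tb : TieBreak V) : TieBreak V := fun h => !tb h.swap

lemma Hist.swap_swap (h : Hist V) : h.swap.swap = h := by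
  simp [Hist.swap, Function.comp_def]

lemma Hist.cur_swap (h : Hist V) : h.swap.cur = h.cur := by
  cases hlast : h.rounds.getLast? <;> simp [Hist.cur, Hist.swap, hlast]

lemma Hist.pay1_swap (h : Hist V) : h.swap.pay1 = h.pay2 := by
  rw [Hist.pay2, Hist.pay1, Hist.pay1, List.sum_neg, List.map_map, Hist.swap, List.map_map]
  congr 2
  funext r
  cases hr : r.p1Won <;> simp [hr]

lemma Strat.swap_swap (f : Strat V) : f.swap.swap = f :=
  funext fun h => congrArg f h.swap_swap

lemma extend_swap (tb : TieBreak V) (f1 f2 : Strat V) (h : Hist V) :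
    (extend tb f1 f2 h).swap = extend tb.swap f2.swap f1.swap h.swap := by
  have hwinner : ((f1 h).1 < (f2 h).1 ∨ (f2 h).1 = (f1 h).1 ∧ (!tb h) = true) ↔
      ¬((f2 h).1 < (f1 h).1 ∨ (f1 h).1 = (f2 h).1 ∧ tb h = true) := by
    rcases lt_trichotomy (f1 h).1 (f2 h).1 with hlt | heq | hgt
    · simp [hlt, hlt.ne, hlt.not_gt]
    · simp [heq]
    · simp [hgt, hgt.ne, hgt.not_gt]
  simp only [extend, Strat.swap, TieBreak.swap, Hist.swap_swap, hwinner, ite_not]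
  split_ifs <;> simp [Hist.swap]

lemma play_swap (tb : TieBreak V) (f1 f2 : Strat V) (v0 : V) (n : ℕ) :
    (play tb f1 f2 v0 n).swap = play tb.swap f2.swap f1.swap v0 n := by
  induction n with
  | zero => rfl
  | succ n ih => rw [play, play, extend_swap, ih]

lemma visit_swap (tb : TieBreak V) (f1 f2 : Strat V) (v0 : V) (n : ℕ) :
    visit tb f1 f2 v0 n = visit tb.swap f2.swap f1.swap v0 n := by
  rw [visit, visit, ← play_swap, Hist.cur_swap]

lemma Memoryless.swap {f : Strat V} (hf : Memoryless f) : Memoryless f.swap := by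
  intro h h' hcur hpay
  refine hf _ _ ?_ ?_
  · rw [Hist.cur_swap, Hist.cur_swap, hcur]
  · rw [Hist.pay1_swap, Hist.pay1_swap, Hist.pay2, Hist.pay2, hpay]

lemma Legal1.swap [Fintype V] {G : BiddingGame V} {f : Strat V} {B : ℝ} (hf : Legal1 G f B) :
    Legal2 G f.swap B := by
  intro tb f1 v0 n
  have hlegal := hf tb.swap f1.swap v0 n
  rwa [← f.swap_swap, ← play_swap, Hist.pay1_swap, Hist.cur_swap, f.swap_swap] at hlegal

end Swap

/-! ### Playing a plan -/

section Play

variable {V : Type}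

lemma extend_cases (tb : TieBreak V) (f1 f2 : Strat V) (h : Hist V) :
    ((extend tb f1 f2 h).cur = (f1 h).2 ∧ (extend tb f1 f2 h).pay1 = h.pay1 + (f1 h).1) ∨
      ((extend tb f1 f2 h).cur = (f2 h).2 ∧ (extend tb f1 f2 h).pay1 = h.pay1 - (f2 h).1 ∧
        (f1 h).1 ≤ (f2 h).1) := by
  unfold extend
  split_ifs with hwin
  · exact Or.inl ⟨by simp [Hist.cur], by simp [Hist.pay1]⟩
  · refine Or.inr ⟨by simp [Hist.cur], by simp [Hist.pay1, sub_eq_add_neg], ?_⟩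
    exact not_lt.1 fun hlt => hwin (Or.inl hlt)

namespace RichmanPlan

variable [Fintype V] {G : BiddingGame V} {T : V → ℝ} {U : Set V} (P : RichmanPlan G.E T U)

/-- Player 1's strategy that bids and moves according to the plan, with initial budget `B`. -/
noncomputable def strategy (B : ℝ) : Strat V :=
  fun h => (P.bid h.cur (B - h.pay1), P.next h.cur)

lemma memoryless_strategy (B : ℝ) : Memoryless (P.strategy B) := by
  intro h h' hcur hpay
  rw [strategy, strategy, hcur, hpay]

variable {B : ℝ}

lemma budget_nonneg (hB : 0 ≤ B) (tb : TieBreak V) (f2 : Strat V) (v0 : V) (n : ℕ) :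
    0 ≤ B - (play tb (P.strategy B) f2 v0 n).pay1 := by
  induction n with
  | zero => simpa [play, Hist.pay1] using hB
  | succ n ih =>
    set h := play tb (P.strategy B) f2 v0 n
    have hle : (P.strategy B h).1 ≤ B - h.pay1 := P.bid_le ih
    have hnonneg : 0 ≤ (P.strategy B h).1 := P.bid_nonneg _ _
    rw [play]
    rcases extend_cases tb (P.strategy B) f2 h with ⟨-, hpay⟩ | ⟨-, hpay, hbid⟩ <;> linarith

lemma legal1_strategy (hB : 0 ≤ B) : Legal1 G (P.strategy B) B := fun tb f2 v0 n =>
  ⟨P.bid_nonneg _ _, P.bid_le (P.budget_nonneg hB tb f2 v0 n), P.edge_next _⟩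

lemma round_strategy {C : ℝ} {f2 : Strat V} (hf2 : Legal2 G f2 C) (tb : TieBreak V) (v0 : V)
    (n : ℕ) :
    P.Round (visit tb (P.strategy B) f2 v0 n) (B - (play tb (P.strategy B) f2 v0 n).pay1)
      (visit tb (P.strategy B) f2 v0 (n + 1))
      (B - (play tb (P.strategy B) f2 v0 (n + 1)).pay1) := by
  have hmove := (hf2 tb (P.strategy B) v0 n).2.2
  rw [visit, visit, play]
  set h := play tb (P.strategy B) f2 v0 n
  rcases extend_cases tb (P.strategy B) f2 h with ⟨hcur, hpay⟩ | ⟨hcur, hpay, hbid⟩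
  · refine Or.inl ⟨hcur, ?_⟩
    rw [hpay, strategy]
    ring
  · refine Or.inr ⟨hcur ▸ hmove, ?_⟩
    change P.bid h.cur (B - h.pay1) ≤ _ at hbid
    linarith

lemma frequently_visit_mem {f2 : Strat V} (hf2 : Legal2 G f2 (1 - B)) (tb : TieBreak V) {v0 : V}
    (hB : T v0 < B) : ∃ᶠ n in atTop, visit tb (P.strategy B) f2 v0 n ∈ U := by
  refine frequently_mem_of_round (P.round_strategy hf2 tb v0) ?_ fun n => ?_
  · simpa [visit, play, Hist.cur, Hist.pay1] using hB
  · obtain ⟨hnonneg, hle, -⟩ := hf2 tb (P.strategy B) v0 n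
    rw [Hist.pay2] at hle
    linarith

end RichmanPlan

end Play

/-! ### Parity games -/

section Parity

variable {V : Type} {p : V → ℕ}

/-- The index deciding the parity condition: the largest one visited infinitely often. -/
noncomputable def limitIndex (p : V → ℕ) (tb : TieBreak V) (f1 f2 : Strat V) (v0 : V) : ℕ :=
  sSup {k | ∃ᶠ n in atTop, p (visit tb f1 f2 v0 n) = k}

lemma win1Parity_iff {tb : TieBreak V} {f1 f2 : Strat V} {v0 : V} :
    Win1Parity p tb f1 f2 v0 ↔ Odd (limitIndex p tb f1 f2 v0) := by
  simp only [Win1Parity, limitIndex, frequently_atTop, ge_iff_le]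

lemma limitIndex_swap (p : V → ℕ) (tb : TieBreak V) (f1 f2 : Strat V) (v0 : V) :
    limitIndex p tb f1 f2 v0 = limitIndex p tb.swap f2.swap f1.swap v0 := by
  simp only [limitIndex, visit_swap tb f1 f2]

variable [Fintype V] {G : BiddingGame V}

namespace RichmanPlan

variable {T : V → ℝ} {q : ℕ → Prop} {B : ℝ}

theorem exists_memoryless_legal1 (P : RichmanPlan G.E T {u | IsBottomMax G.E p u ∧ q (p u)})
    (hB : 0 ≤ B) :
    ∃ f1 : Strat V, Memoryless f1 ∧ Legal1 G f1 B ∧ ∀ v, T v < B → ∀ (tb : TieBreak V)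
      (f2 : Strat V), Legal2 G f2 (1 - B) → q (limitIndex p tb f1 f2 v) :=
  ⟨P.strategy B, P.memoryless_strategy B, P.legal1_strategy hB, fun v hv tb _ hf2 =>
    sSup_frequently_index_of_frequently_isBottomMax (fun n => (P.round_strategy hf2 tb v n).edge)
      (P.frequently_visit_mem hf2 tb hv)⟩

theorem exists_memoryless_legal2 (P : RichmanPlan G.E T {u | IsBottomMax G.E p u ∧ q (p u)})
    (hB : 0 ≤ B) :
    ∃ f2 : Strat V, Memoryless f2 ∧ Legal2 G f2 B ∧ ∀ v, T v < B → ∀ (tb : TieBreak V)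
      (f1 : Strat V), Legal1 G f1 (1 - B) → q (limitIndex p tb f1 f2 v) := by
  obtain ⟨f, hmemoryless, hlegal, hwins⟩ := P.exists_memoryless_legal1 hB
  refine ⟨f.swap, hmemoryless.swap, hlegal.swap, fun v hv tb f1 hf1 => ?_⟩
  rw [limitIndex_swap, f.swap_swap]
  exact hwins v hv tb.swap f1.swap hf1.swap

end RichmanPlan

theorem exists_richmanPlans_parity (G : BiddingGame V) (p : V → ℕ) :
    ∃ T : V → unitInterval,
      Nonempty (RichmanPlan G.E (fun v => T v) {u | IsBottomMax G.E p u ∧ Odd (p u)}) ∧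
      Nonempty (RichmanPlan G.E (fun v => 1 - T v) {u | IsBottomMax G.E p u ∧ ¬ Odd (p u)}) := by
  obtain ⟨T, hT, hTp⟩ := exists_isRichmanPotential_parity G p
  refine ⟨T, hT.nonempty_richmanPlan (fun v => (T v).2.1) fun v => ?_,
    hT.one_sub.nonempty_richmanPlan (fun v => sub_nonneg.2 (T v).2.2) fun v => ?_⟩
  all_goals
    obtain ⟨u, hvu, hu⟩ := exists_isBottomMax G.E p v
    refine ⟨u, hvu, ?_⟩
    by_cases hodd : Odd (p u) <;> simp [-Nat.not_odd_iff_even, hu, hTp u hu, hodd]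

lemma Win1ParityFrom.budget_nonneg {v : V} {B : ℝ} (h : Win1ParityFrom G p v B) : 0 ≤ B := by
  obtain ⟨f1, hf1, -⟩ := h fun _ => true
  obtain ⟨hnonneg, hle, -⟩ := hf1 (fun _ => true) f1 v 0
  simpa [play, Hist.pay1] using hnonneg.trans hle

lemma Win2ParityFrom.budget_nonneg {v : V} {B : ℝ} (h : Win2ParityFrom G p v B) : 0 ≤ B := by
  obtain ⟨f2, hf2, -⟩ := h fun _ => true
  obtain ⟨hnonneg, hle, -⟩ := hf2 (fun _ => true) f2 v 0
  simpa [play, Hist.pay2, Hist.pay1] using hnonneg.trans hle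

lemma Win1ParityFrom.not_win2ParityFrom {v : V} {B : ℝ} (h1 : Win1ParityFrom G p v B) :
    ¬ Win2ParityFrom G p v (1 - B) := by
  intro h2
  obtain ⟨f1, hf1, hwin1⟩ := h1 fun _ => true
  obtain ⟨f2, hf2, hwin2⟩ := h2 fun _ => true
  exact hwin2 f1 (by rwa [sub_sub_cancel]) (hwin1 f2 hf2)

namespace IsThreshParity

variable {v : V} {t t' : ℝ}

lemma nonneg (ht : IsThreshParity G p v t) : 0 ≤ t :=
  le_of_forall_gt_imp_ge_of_dense fun B hB =>
    (le_total B 1).elim (fun hB1 => (ht.1 B hB1 hB).budget_nonneg) zero_le_one.trans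

lemma le_one (ht : IsThreshParity G p v t) : t ≤ 1 :=
  sub_nonneg.1 <| le_of_forall_gt_imp_ge_of_dense fun B hB =>
    (le_total B 1).elim (fun hB1 => (ht.2 B hB1 hB).budget_nonneg) zero_le_one.trans

lemma le (ht : IsThreshParity G p v t) (ht' : IsThreshParity G p v t') : t' ≤ t := by
  by_contra! hlt
  obtain ⟨B, htB, hBt'⟩ := exists_between hlt
  have hB1 : B ≤ 1 := hBt'.le.trans ht'.le_one
  have hB0 : 0 ≤ B := ht.nonneg.trans htB.le
  exact (ht.1 B hB1 htB).not_win2ParityFrom (ht'.2 (1 - B) (by linarith) (by linarith))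

lemma unique (ht : IsThreshParity G p v t) (ht' : IsThreshParity G p v t') : t = t' :=
  le_antisymm (ht'.le ht) (ht.le ht')

end IsThreshParity

end Parity

theorem parity_memoryless_winning_strategies_general {V : Type} [Fintype V] (G : BiddingGame V)
    (p : V → ℕ) :
    ∃ T : V → unitInterval, (∀ v t, IsThreshParity G p v t ↔ t = T v) ∧
      (∀ B : ℝ, 0 ≤ B → ∃ f1 : Strat V, Memoryless f1 ∧ Legal1 G f1 B ∧
        ∀ v, T v < B → ∀ (tb : TieBreak V) (f2 : Strat V), Legal2 G f2 (1 - B) →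
          Win1Parity p tb f1 f2 v) ∧
      (∀ B : ℝ, 0 ≤ B → ∃ f2 : Strat V, Memoryless f2 ∧ Legal2 G f2 B ∧
        ∀ v, 1 - T v < B → ∀ (tb : TieBreak V) (f1 : Strat V), Legal1 G f1 (1 - B) →
          ¬ Win1Parity p tb f1 f2 v) := by
  obtain ⟨T, ⟨P1⟩, ⟨P2⟩⟩ := exists_richmanPlans_parity G p
  have wins1 := fun (B : ℝ) (hB : 0 ≤ B) => P1.exists_memoryless_legal1 (q := Odd) hB
  have wins2 := fun (B : ℝ) (hB : 0 ≤ B) => P2.exists_memoryless_legal2 (q := (¬ Odd ·)) hB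
  simp only [← win1Parity_iff] at wins1 wins2
  have hthresh : ∀ v, IsThreshParity G p v (T v) := by
    refine fun v => ⟨fun B _ hB tb => ?_, fun B _ hB tb => ?_⟩
    · obtain ⟨f1, -, hlegal, hwins⟩ := wins1 B ((T v).2.1.trans hB.le)
      exact ⟨f1, hlegal, hwins v hB tb⟩
    · obtain ⟨f2, -, hlegal, hwins⟩ := wins2 B ((sub_nonneg.2 (T v).2.2).trans hB.le)
      exact ⟨f2, hlegal, hwins v hB tb⟩
  exact ⟨T, fun v t => ⟨fun ht => ht.unique (hthresh v), fun ht => ht ▸ hthresh v⟩, wins1, wins2⟩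

/-- In a parity bidding game, each player has a *memoryless* winning
strategy whenever his budget exceeds his threshold budget: Player 1 when his budget
exceeds `Thresh(v) = t`, Player 2 when his budget exceeds `Thresh₂(v) = 1 - t`. -/
theorem parity_memoryless_winning_strategies
    {V : Type} [Fintype V] (G : BiddingGame V) (p : V → ℕ) (v : V) (t : ℝ)
    (ht : IsThreshParity G p v t) :
    (∀ B : ℝ, B ≤ 1 → t < B → ∀ tb : TieBreak V,
      ∃ f1 : Strat V, Memoryless f1 ∧ Legal1 G f1 B ∧
        ∀ f2 : Strat V, Legal2 G f2 (1 - B) → Win1Parity p tb f1 f2 v) ∧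
    (∀ B : ℝ, B ≤ 1 → 1 - t < B → ∀ tb : TieBreak V,
      ∃ f2 : Strat V, Memoryless f2 ∧ Legal2 G f2 B ∧
        ∀ f1 : Strat V, Legal1 G f1 (1 - B) → ¬ Win1Parity p tb f1 f2 v) := by
  obtain ⟨T, hT, wins1, wins2⟩ := parity_memoryless_winning_strategies_general G p
  obtain rfl := (hT v t).1 ht
  exact ⟨fun B _ hB tb => (wins1 B ((T v).2.1.trans hB.le)).imp fun _ h =>
      ⟨h.1, h.2.1, h.2.2 v hB tb⟩,
    fun B _ hB tb => (wins2 B ((sub_nonneg.2 (T v).2.2).trans hB.le)).imp fun _ h =>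
      ⟨h.1, h.2.1, h.2.2 v hB tb⟩⟩
end

section
/- In every mean-payoff bidding game, threshold budgets exist and are unique: there is exactly one function Thresh : V → [0,1] such that for every vertex v, Min guarantees a nonpositive mean-payoff value from v whenever his initial budget exceeds Thresh(v), and Max guarantees a strictly positive mean-payoff value from v whenever his initial budget exceeds 1 − Thresh(v). -/
open scoped Classical

/-!
A player's least winning budgets for a prefix-independent objective lie below the average of their
largest and smallest values over the successors. Adding the two players' functions, the maximum of
the sum is attained on an invariant set, hence on a strongly connected one, so it suffices that
there one of the players wins with any positive budget.

On such a set some `f` and `γ` satisfy `w v + (f⁺ + f⁻) / 2 = f v + γ`, where `f⁺` and `f⁻` are the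
extreme values of `f` over the successors of `v`: this is the limit of the discounted equation,
whose solutions have bounded oscillation by a Harnack inequality. If `γ ≤ 0`, Min plays to decrease
the energy corrected by `f`, whose increments are at most `± (f⁺ - f⁻) / 2` according to who wins
the bidding. He bids like a gambler against this walk, keeping his budget above a mixture of
exponential supermartingales; since his budget never exceeds `1`, the walk grows sublinearly.
If `γ > 0`, Max does the same with the weights `γ - w`.
-/

/-! ### Histories -/

section Histories

variable {V : Type}

/-- The history obtained from `h` by playing the further round `r`. -/
def Hist.snoc (h : Hist V) (r : BidRound V) : Hist V := ⟨h.init, h.rounds ++ [r]⟩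

@[simp]
lemma Hist.cur_snoc (h : Hist V) (r : BidRound V) : (h.snoc r).cur = r.dest := by
  simp [Hist.cur, Hist.snoc]

@[simp]
lemma Hist.pay1_snoc (h : Hist V) (r : BidRound V) :
    (h.snoc r).pay1 = h.pay1 + if r.p1Won then r.bid else -r.bid := by
  simp [Hist.pay1, Hist.snoc]

lemma extend_eq_snoc (tb : TieBreak V) (f1 f2 : Strat V) (h : Hist V) :
    ((f2 h).1 ≤ (f1 h).1 ∧ extend tb f1 f2 h = h.snoc ⟨(f1 h).2, (f1 h).1, true⟩) ∨
      ((f1 h).1 ≤ (f2 h).1 ∧ extend tb f1 f2 h = h.snoc ⟨(f2 h).2, (f2 h).1, false⟩) := by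
  unfold extend
  split_ifs with hwin
  · exact .inl ⟨hwin.elim le_of_lt fun htie => htie.1.ge, rfl⟩
  · exact .inr ⟨not_lt.1 fun hlt => hwin (.inl hlt), rfl⟩

lemma Hist.pay1_eq_neg_pay2 (h : Hist V) : h.pay1 = -h.pay2 := (neg_neg _).symm

end Histories

namespace BiddingGame

/-! ### Policies -/

section Policies

variable {V : Type} [Fintype V]

/-- The legal bid and move closest to the intended action `a` for a player who has budget `c.2`
while the token is at `c.1`. -/
noncomputable def legalize (G : BiddingGame V) (c : V × ℝ) (a : ℝ × V) : ℝ × V :=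
  (max 0 (min a.1 c.2), if G.E c.1 a.2 then a.2 else (G.total c.1).choose)

lemma legalize_nonneg (G : BiddingGame V) (c : V × ℝ) (a : ℝ × V) : 0 ≤ (G.legalize c a).1 :=
  le_max_left _ _

lemma legalize_le {c : V × ℝ} (hc : 0 ≤ c.2) (G : BiddingGame V) (a : ℝ × V) :
    (G.legalize c a).1 ≤ c.2 :=
  max_le hc (min_le_right _ _)

lemma legalize_edge (G : BiddingGame V) (c : V × ℝ) (a : ℝ × V) :
    G.E c.1 (G.legalize c a).2 := by
  unfold legalize
  dsimp only
  split_ifs with h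
  · exact h
  · exact (G.total c.1).choose_spec

lemma legalize_eq_self {G : BiddingGame V} {c : V × ℝ} {a : ℝ × V} (h0 : 0 ≤ a.1)
    (hle : a.1 ≤ c.2) (hE : G.E c.1 a.2) : G.legalize c a = a := by
  unfold legalize
  rw [min_eq_left hle, max_eq_right h0, if_pos hE]

/-- What a player intends to do in a bidding game, independently of which of the two players he is
and of the tie-breaking mechanism: a bid and a move, given the list of past configurations (oldest
first) and the current configuration. A configuration is the position of the token together with
the player's budget. -/
abbrev Policy (V : Type) := List (V × ℝ) → V × ℝ → ℝ × V

/-- The legal action prescribed by `σ` at time `n` along the sequence of configurations `x`. -/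
noncomputable def action (G : BiddingGame V) (σ : Policy V) (x : ℕ → V × ℝ) (n : ℕ) : ℝ × V :=
  G.legalize (x n) (σ ((List.range n).map x) (x n))

/-- The sequences of configurations of a player following `σ`. In each round either he wins the
bidding, or he loses it to a bid at least as high as his own; as both outcomes are allowed
whatever the bids are, no tie-breaking mechanism appears. -/
def Consistent (G : BiddingGame V) (σ : Policy V) (x : ℕ → V × ℝ) : Prop :=
  ∀ n, x (n + 1) = ((G.action σ x n).2, (x n).2 - (G.action σ x n).1) ∨
    (G.E (x n).1 (x (n + 1)).1 ∧ (x n).2 + (G.action σ x n).1 ≤ (x (n + 1)).2 ∧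
      (x (n + 1)).2 ≤ 1)

/-- A player with budget `B` has a policy that enforces the objective `Win` from `v`. -/
def Secures (G : BiddingGame V) (Win : (ℕ → V) → Prop) (v : V) (B : ℝ) : Prop :=
  ∃ σ : Policy V, ∀ x : ℕ → V × ℝ,
    x 0 = (v, B) → G.Consistent σ x → Win (fun n => (x n).1)

variable {G : BiddingGame V} {σ : Policy V} {x : ℕ → V × ℝ} {Win Win' : (ℕ → V) → Prop} {v : V}
  {B : ℝ}

lemma Secures.mono (h : G.Secures Win v B) (hWin : ∀ y, Win y → Win' y) :
    G.Secures Win' v B :=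
  let ⟨σ, hσ⟩ := h
  ⟨σ, fun x h0 hx => hWin _ (hσ x h0 hx)⟩

lemma Consistent.edge (hx : G.Consistent σ x) (n : ℕ) : G.E (x n).1 (x (n + 1)).1 := by
  rcases hx n with hwin | ⟨hE, -⟩
  · rw [hwin]
    exact G.legalize_edge _ _
  · exact hE

lemma Consistent.budget_mem (hx : G.Consistent σ x) (h0 : (x 0).2 ∈ Set.Icc (0 : ℝ) 1) (n : ℕ) :
    (x n).2 ∈ Set.Icc (0 : ℝ) 1 := by
  induction n with
  | zero => exact h0
  | succ n ih =>
    have hbid_nonneg : 0 ≤ (G.action σ x n).1 := G.legalize_nonneg _ _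
    have hbid_le : (G.action σ x n).1 ≤ (x n).2 := G.legalize_le ih.1 _
    rcases hx n with hwin | ⟨-, hle, hle_one⟩
    · rw [hwin]
      exact ⟨sub_nonneg.2 hbid_le, (sub_le_self _ hbid_nonneg).trans ih.2⟩
    · exact ⟨(add_nonneg ih.1 hbid_nonneg).trans hle, hle_one⟩

end Policies

/-! ### From policies to strategies of either player -/

section Plays

variable {V : Type}

/-- The configurations along `h`, oldest first, of the player with budget function `budget`. -/
def configs (budget : Hist V → ℝ) (h : Hist V) : List (V × ℝ) :=
  h.rounds.inits.map fun l => ((Hist.mk h.init l).cur, budget ⟨h.init, l⟩)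

lemma configs_snoc (budget : Hist V → ℝ) (h : Hist V) (r : BidRound V) :
    configs budget (h.snoc r) = configs budget h ++ [((h.snoc r).cur, budget (h.snoc r))] := by
  simp [configs, Hist.snoc, List.inits_append]

/-- `H` lists the histories of a play in which a player with strategy `f` and budget function
`budget` faces an opponent with strategy `g`. The definition does not depend on which of them is
Player 1, nor on the tie-breaking mechanism. -/
structure IsPlay (budget : Hist V → ℝ) (f g : Strat V) (H : ℕ → Hist V) : Prop where
  rounds_zero : (H 0).rounds = []
  exists_snoc : ∀ n, ∃ r, H (n + 1) = (H n).snoc r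
  win_or_lose : ∀ n,
    ((H (n + 1)).cur = (f (H n)).2 ∧ budget (H (n + 1)) = budget (H n) - (f (H n)).1) ∨
      ((f (H n)).1 ≤ (g (H n)).1 ∧ (H (n + 1)).cur = (g (H n)).2 ∧
        budget (H (n + 1)) = budget (H n) + (g (H n)).1)

lemma isPlay_play_left (B : ℝ) (tb : TieBreak V) (f1 f2 : Strat V) (v : V) :
    IsPlay (fun h => B - h.pay1) f1 f2 (play tb f1 f2 v) where
  rounds_zero := rfl
  exists_snoc n := (extend_eq_snoc tb f1 f2 (play tb f1 f2 v n)).elim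
    (fun h => ⟨_, h.2⟩) fun h => ⟨_, h.2⟩
  win_or_lose n := by
    rcases extend_eq_snoc tb f1 f2 (play tb f1 f2 v n) with ⟨-, hn⟩ | ⟨hle, hn⟩ <;>
      rw [play, hn]
    · exact .inl ⟨Hist.cur_snoc _ _, by rw [Hist.pay1_snoc, if_pos rfl, sub_sub]⟩
    · exact .inr ⟨hle, Hist.cur_snoc _ _, by
        rw [Hist.pay1_snoc, if_neg Bool.false_ne_true, ← sub_eq_add_neg, sub_sub_eq_add_sub,
          add_sub_right_comm]⟩

lemma isPlay_play_right (B : ℝ) (tb : TieBreak V) (f1 f2 : Strat V) (v : V) :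
    IsPlay (fun h => B - h.pay2) f2 f1 (play tb f1 f2 v) where
  rounds_zero := rfl
  exists_snoc := (isPlay_play_left B tb f1 f2 v).exists_snoc
  win_or_lose n := by
    rcases extend_eq_snoc tb f1 f2 (play tb f1 f2 v n) with ⟨hle, hn⟩ | ⟨-, hn⟩ <;>
      rw [play, hn]
    · exact .inr ⟨hle, Hist.cur_snoc _ _, by
        rw [Hist.pay2, Hist.pay2, Hist.pay1_snoc, if_pos rfl, neg_add, sub_add_eq_sub_sub,
          sub_neg_eq_add]⟩
    · exact .inl ⟨Hist.cur_snoc _ _, by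
        rw [Hist.pay2, Hist.pay2, Hist.pay1_snoc, if_neg Bool.false_ne_true, neg_add, neg_neg,
          sub_add_eq_sub_sub]⟩

lemma IsPlay.configs_eq {budget : Hist V → ℝ} {f g : Strat V} {H : ℕ → Hist V}
    (hH : IsPlay budget f g H) (n : ℕ) :
    configs budget (H n) =
      (List.range (n + 1)).map fun i => ((H i).cur, budget (H i)) := by
  induction n with
  | zero =>
    have hnil : Hist.mk (H 0).init [] = H 0 := by rw [← hH.rounds_zero]
    simp [configs, hH.rounds_zero, hnil]
  | succ n ih =>
    obtain ⟨r, hr⟩ := hH.exists_snoc n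
    rw [List.range_succ, List.map_append, ← ih, hr, configs_snoc]
    simp [hr]

end Plays

section Induced

variable {V : Type} [Fintype V]

/-- The strategy of a player with budget function `budget` who follows the policy `σ`. -/
noncomputable def inducedStrat (G : BiddingGame V) (budget : Hist V → ℝ) (σ : Policy V) :
    Strat V :=
  fun h => G.legalize (h.cur, budget h) (σ (configs budget h).dropLast (h.cur, budget h))

variable {G : BiddingGame V} {budget : Hist V → ℝ} {σ : Policy V} {g : Strat V} {H : ℕ → Hist V}

lemma IsPlay.inducedStrat_apply (hH : IsPlay budget (G.inducedStrat budget σ) g H) (n : ℕ) :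
    G.inducedStrat budget σ (H n) = G.action σ (fun i => ((H i).cur, budget (H i))) n := by
  simp [inducedStrat, action, hH.configs_eq, List.range_succ]

lemma IsPlay.budget_nonneg (hH : IsPlay budget (G.inducedStrat budget σ) g H)
    (h0 : 0 ≤ budget (H 0)) (n : ℕ) : 0 ≤ budget (H n) := by
  induction n with
  | zero => exact h0
  | succ n ih =>
    have hbid_nonneg : 0 ≤ (G.inducedStrat budget σ (H n)).1 := G.legalize_nonneg _ _
    have hbid_le : (G.inducedStrat budget σ (H n)).1 ≤ budget (H n) :=
      legalize_le (c := ((H n).cur, budget (H n))) ih _ _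
    rcases hH.win_or_lose n with ⟨-, heq⟩ | ⟨hle, -, heq⟩ <;> linarith

lemma IsPlay.inducedStrat_legal (hH : IsPlay budget (G.inducedStrat budget σ) g H)
    (h0 : 0 ≤ budget (H 0)) (n : ℕ) :
    0 ≤ (G.inducedStrat budget σ (H n)).1 ∧
      (G.inducedStrat budget σ (H n)).1 ≤ budget (H n) ∧
      G.E (H n).cur (G.inducedStrat budget σ (H n)).2 :=
  ⟨G.legalize_nonneg _ _,
    legalize_le (c := ((H n).cur, budget (H n))) (hH.budget_nonneg h0 n) _ _,
    G.legalize_edge ((H n).cur, budget (H n)) _⟩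

lemma IsPlay.consistent (hH : IsPlay budget (G.inducedStrat budget σ) g H)
    (hg_edge : ∀ n, G.E (H n).cur (g (H n)).2)
    (hg_le : ∀ n, budget (H n) + (g (H n)).1 ≤ 1) :
    G.Consistent σ fun n => ((H n).cur, budget (H n)) := by
  intro n
  rw [← hH.inducedStrat_apply n]
  rcases hH.win_or_lose n with ⟨hcur, hbudget⟩ | ⟨hle, hcur, hbudget⟩
  · exact .inl (Prod.ext hcur hbudget)
  · simp only [hcur, hbudget, add_le_add_iff_left]
    exact .inr ⟨hg_edge n, hle, hg_le n⟩

variable {Win : (ℕ → V) → Prop} {v : V} {B : ℝ}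

lemma Secures.exists_legal1 (h : G.Secures Win v B) (hB : 0 ≤ B) :
    ∃ f1, Legal1 G f1 B ∧
      ∀ tb f2, Legal2 G f2 (1 - B) → Win (visit tb f1 f2 v) := by
  obtain ⟨σ, hσ⟩ := h
  refine ⟨G.inducedStrat (fun h => B - h.pay1) σ, fun tb f2 v n => ?_, fun tb f2 hf2 => ?_⟩
  · exact (isPlay_play_left B tb _ f2 v).inducedStrat_legal (by simpa [play, Hist.pay1]) n
  · refine hσ _ (by simp [play, Hist.cur, Hist.pay1]) <|
      (isPlay_play_left B tb _ f2 v).consistent (fun n => (hf2 tb _ v n).2.2) fun n => ?_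
    have hle := (hf2 tb (G.inducedStrat (fun h => B - h.pay1) σ) v n).2.1
    rw [Hist.pay2] at hle
    linarith

lemma Secures.exists_legal2 (h : G.Secures Win v B) (hB : 0 ≤ B) :
    ∃ f2, Legal2 G f2 B ∧
      ∀ tb f1, Legal1 G f1 (1 - B) → Win (visit tb f1 f2 v) := by
  obtain ⟨σ, hσ⟩ := h
  refine ⟨G.inducedStrat (fun h => B - h.pay2) σ, fun tb f1 v n => ?_, fun tb f1 hf1 => ?_⟩
  · exact (isPlay_play_right B tb f1 _ v).inducedStrat_legal
      (by simpa [play, Hist.pay1, Hist.pay2]) n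
  · refine hσ _ (by simp [play, Hist.cur, Hist.pay1, Hist.pay2]) <|
      (isPlay_play_right B tb f1 _ v).consistent (fun n => (hf1 tb _ v n).2.2) fun n => ?_
    have hle := (hf1 tb (G.inducedStrat (fun h => B - h.pay2) σ) v n).2.1
    rw [Hist.pay1_eq_neg_pay2] at hle
    linarith

end Induced

/-! ### Averages over successors and invariant sets -/

section Successors

variable {V : Type} [Fintype V]

/-- The largest value of `f` on the successors of `v`. -/
noncomputable def maxSucc (G : BiddingGame V) (f : V → ℝ) (v : V) : ℝ :=
  (G.adj v).sup' (G.adj_nonempty v) f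

/-- The smallest value of `f` on the successors of `v`. -/
noncomputable def minSucc (G : BiddingGame V) (f : V → ℝ) (v : V) : ℝ :=
  (G.adj v).inf' (G.adj_nonempty v) f

/-- A set of vertices that the token cannot leave. -/
def IsInvariant (G : BiddingGame V) (C : Set V) : Prop :=
  ∀ v ∈ C, ∀ a, G.E v a → a ∈ C

variable {G : BiddingGame V} {C : Set V} {v a : V}

lemma mem_adj : a ∈ G.adj v ↔ G.E v a := by
  simp [adj]

lemma le_maxSucc (f : V → ℝ) (h : G.E v a) : f a ≤ G.maxSucc f v :=
  Finset.le_sup' f (mem_adj.2 h)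

lemma minSucc_le (f : V → ℝ) (h : G.E v a) : G.minSucc f v ≤ f a :=
  Finset.inf'_le f (mem_adj.2 h)

lemma exists_eq_maxSucc (G : BiddingGame V) (f : V → ℝ) (v : V) :
    ∃ a, G.E v a ∧ G.maxSucc f v = f a := by
  obtain ⟨a, ha, h⟩ := Finset.exists_mem_eq_sup' (G.adj_nonempty v) f
  exact ⟨a, mem_adj.1 ha, h⟩

lemma exists_eq_minSucc (G : BiddingGame V) (f : V → ℝ) (v : V) :
    ∃ a, G.E v a ∧ G.minSucc f v = f a := by
  obtain ⟨a, ha, h⟩ := Finset.exists_mem_eq_inf' (G.adj_nonempty v) f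
  exact ⟨a, mem_adj.1 ha, h⟩

lemma minSucc_le_maxSucc (G : BiddingGame V) (f : V → ℝ) (v : V) :
    G.minSucc f v ≤ G.maxSucc f v := by
  obtain ⟨a, ha, h⟩ := G.exists_eq_minSucc f v
  exact h.trans_le (le_maxSucc f ha)

lemma exists_isInvariant_forall_add_le [Nonempty V] {t s : V → ℝ}
    (ht : ∀ v, t v ≤ (G.maxSucc t v + G.minSucc t v) / 2)
    (hs : ∀ v, s v ≤ (G.maxSucc s v + G.minSucc s v) / 2) :
    ∃ C : Set V, C.Nonempty ∧ G.IsInvariant C ∧ ∀ v ∈ C, ∀ a, t a + s a ≤ t v + s v := by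
  obtain ⟨p, hp⟩ := Finite.exists_max fun v => t v + s v
  obtain ⟨q, hqp, hq⟩ : ∃ q, t q + s q = t p + s p ∧
      ∀ v, t v + s v = t p + s p → t v ≤ t q :=
    Set.exists_max_image {v | t v + s v = t p + s p} t (Set.toFinite _) ⟨p, rfl⟩
  -- Both inequalities are equalities where `t + s`, and among such vertices `t`, is maximal.
  refine ⟨{v | t v + s v = t p + s p ∧ t v = t q}, ⟨q, hqp, rfl⟩, ?_, fun v hv a => ?_⟩
  · rintro v ⟨hsum, htv⟩ b hb
    obtain ⟨a, ha, hat⟩ := G.exists_eq_maxSucc t v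
    obtain ⟨c, hc, hcs⟩ := G.exists_eq_maxSucc s v
    have hmin_s := minSucc_le s ha
    have hmin_t := minSucc_le t hc
    have hpa := hp a
    have hpc := hp c
    have htv_le := ht v
    have hsv_le := hs v
    have hqa : t a ≤ t q := hq a (by linarith)
    exact ⟨by linarith [hp b, minSucc_le t hb, minSucc_le s hb],
      by linarith [minSucc_le t hb, le_maxSucc t hb]⟩
  · exact (hp a).trans_eq hv.1.symm

lemma IsInvariant.exists_stronglyConnected_subset (hC : G.IsInvariant C) (hne : C.Nonempty) :
    ∃ D ⊆ C, D.Nonempty ∧ G.IsInvariant D ∧ ∀ v ∈ D, ∀ a ∈ D, Relation.ReflTransGen G.E v a := by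
  obtain ⟨D, hDC, ⟨hDne, hD⟩, hmin⟩ :=
    exists_minimal_le_of_wellFoundedLT (fun D : Set V => D.Nonempty ∧ G.IsInvariant D) C ⟨hne, hC⟩
  refine ⟨D, hDC, hDne, hD, fun v hv a ha => ?_⟩
  have hreach : {b ∈ D | Relation.ReflTransGen G.E v b}.Nonempty ∧
      G.IsInvariant {b ∈ D | Relation.ReflTransGen G.E v b} :=
    ⟨⟨v, hv, .refl⟩, fun b hb c hbc => ⟨hD b hb.1 c hbc, hb.2.tail hbc⟩⟩
  exact (hmin hreach (Set.sep_subset _ _) ha).2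

end Successors

/-! ### Thresholds of tail objectives -/

section Thresholds

variable {V : Type} [Fintype V] {G : BiddingGame V} {Win : (ℕ → V) → Prop} {v : V}

/-- The infimum of the budgets above which the objective `Win` can be secured from `v`. -/
noncomputable def threshold (G : BiddingGame V) (Win : (ℕ → V) → Prop) (v : V) : ℝ :=
  sInf {τ | τ ∈ Set.Icc (0 : ℝ) 1 ∧ ∀ B, τ < B → B ≤ 1 → G.Secures Win v B}

lemma threshold_le {τ : ℝ} (hτ : τ ∈ Set.Icc (0 : ℝ) 1)
    (h : ∀ B, τ < B → B ≤ 1 → G.Secures Win v B) : G.threshold Win v ≤ τ :=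
  csInf_le ⟨0, fun _ h => h.1.1⟩ ⟨hτ, h⟩

lemma threshold_mem_Icc (G : BiddingGame V) (Win : (ℕ → V) → Prop) (v : V) :
    G.threshold Win v ∈ Set.Icc (0 : ℝ) 1 := by
  have hone : ∀ B : ℝ, 1 < B → B ≤ 1 → G.Secures Win v B := fun B hB hB1 => absurd hB hB1.not_gt
  exact ⟨le_csInf ⟨1, by simp, hone⟩ fun _ h => h.1.1, threshold_le (by simp) hone⟩

lemma secures_of_threshold_lt {B : ℝ} (h : G.threshold Win v < B) (hB : B ≤ 1) :
    G.Secures Win v B := by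
  have hne : {τ | τ ∈ Set.Icc (0 : ℝ) 1 ∧ ∀ B, τ < B → B ≤ 1 → G.Secures Win v B}.Nonempty :=
    ⟨1, by simp, fun B hB hB1 => absurd hB hB1.not_gt⟩
  obtain ⟨τ, hτ, hlt⟩ := exists_lt_of_csInf_lt hne h
  exact hτ.2 B hlt hB

lemma Secures.step (htail : ∀ y : ℕ → V, Win (fun n => y (n + 1)) → Win y) {a : V} {B b : ℝ}
    (hb : 0 ≤ b) (hbB : b ≤ B) (ha : G.E v a) (hwin : G.Secures Win a (B - b))
    (hlose : ∀ c, G.E v c → ∀ B', B + b ≤ B' → B' ≤ 1 → G.Secures Win c B') :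
    G.Secures Win v B := by
  have hpolicy : ∀ c : V × ℝ, G.Secures Win c.1 c.2 → ∃ σ : Policy V, ∀ x : ℕ → V × ℝ,
      x 0 = c → G.Consistent σ x → Win (fun n => (x n).1) := fun _ h => h
  have : Nonempty (Policy V) := ⟨fun _ _ => (b, a)⟩
  choose! choice hchoice using hpolicy
  let σ : Policy V
    | [], _ => (b, a)
    | _ :: l, c => choice (l.headD c) l c
  refine ⟨σ, fun x h0 hx => htail _ ?_⟩
  have haction_zero : G.action σ x 0 = (b, a) :=
    legalize_eq_self hb (by simpa [h0] using hbB) (by simpa [h0] using ha)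
  have haction_succ : ∀ n,
      G.action σ x (n + 1) = G.action (choice (x 1)) (fun i => x (i + 1)) n := by
    intro n
    have hhead : ((List.range n).map fun i => x (i + 1)).headD (x (n + 1)) = x 1 := by
      cases n <;> simp [List.range_succ_eq_map]
    simp only [action, List.range_succ_eq_map, List.map_cons, List.map_map]
    exact congrArg (fun c => G.legalize (x (n + 1)) (choice c _ _)) hhead
  have hone : G.Secures Win (x 1).1 (x 1).2 := by
    have h := hx 0
    rw [haction_zero, h0] at h
    rcases h with hx1 | ⟨hE, hle, hle_one⟩
    · rw [hx1]
      exact hwin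
    · exact hlose _ hE _ hle hle_one
  refine hchoice (x 1) hone (fun i => x (i + 1)) rfl fun n => ?_
  rw [← haction_succ n]
  exact hx (n + 1)

lemma threshold_le_average (htail : ∀ y : ℕ → V, Win (fun n => y (n + 1)) → Win y) (v : V) :
    G.threshold Win v ≤
      (G.maxSucc (G.threshold Win) v + G.minSucc (G.threshold Win) v) / 2 := by
  obtain ⟨a, ha, hmin⟩ := G.exists_eq_minSucc (G.threshold Win) v
  obtain ⟨c, -, hmax⟩ := G.exists_eq_maxSucc (G.threshold Win) v
  have hle := G.minSucc_le_maxSucc (G.threshold Win) v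
  obtain ⟨ha0, -⟩ := G.threshold_mem_Icc Win a
  obtain ⟨-, hc1⟩ := G.threshold_mem_Icc Win c
  refine threshold_le ⟨by linarith, by linarith⟩ fun B hB hB1 => ?_
  -- Bidding half the gap leaves more than the threshold after winning and after losing.
  refine Secures.step htail
    (b := (G.maxSucc (G.threshold Win) v - G.minSucc (G.threshold Win) v) / 2)
    (by linarith) (by linarith) ha (secures_of_threshold_lt (by linarith) (by linarith))
    fun u hu B' hB' hB'1 => secures_of_threshold_lt ?_ hB'1
  linarith [le_maxSucc (G.threshold Win) hu]

/-- `t` is a threshold budget at `v` for the objective `Win` of Player 1: with a larger budget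
Player 1 enforces `Win`, and with a budget larger than `1 - t` Player 2 enforces its negation. -/
def IsThreshold (G : BiddingGame V) (Win : (ℕ → V) → Prop) (v : V) (t : ℝ) : Prop :=
  (∀ B : ℝ, B ≤ 1 → t < B → ∀ tb : TieBreak V, ∃ f1 : Strat V, Legal1 G f1 B ∧
      ∀ f2 : Strat V, Legal2 G f2 (1 - B) → Win (visit tb f1 f2 v)) ∧
    (∀ B : ℝ, B ≤ 1 → 1 - t < B → ∀ tb : TieBreak V, ∃ f2 : Strat V, Legal2 G f2 B ∧
      ∀ f1 : Strat V, Legal1 G f1 (1 - B) → ¬ Win (visit tb f1 f2 v))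

lemma IsThreshold.le {t t' : ℝ} (h : G.IsThreshold Win v t) (h' : G.IsThreshold Win v t')
    (ht : 0 ≤ t) (ht' : t' ≤ 1) : t' ≤ t := by
  by_contra! hlt
  obtain ⟨f1, hf1, hwin1⟩ := h.1 ((t + t') / 2) (by linarith) (by linarith) fun _ => true
  obtain ⟨f2, hf2, hwin2⟩ := h'.2 (1 - (t + t') / 2) (by linarith) (by linarith) fun _ => true
  rw [sub_sub_cancel] at hwin2
  exact hwin2 f1 hf1 (hwin1 f2 hf2)

lemma IsThreshold.unique {t t' : ℝ} (h : G.IsThreshold Win v t) (h' : G.IsThreshold Win v t')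
    (ht : t ∈ Set.Icc (0 : ℝ) 1) (ht' : t' ∈ Set.Icc (0 : ℝ) 1) : t = t' :=
  le_antisymm (h'.le h ht'.1 ht.2) (h.le h' ht.1 ht'.2)

lemma isThreshold_threshold {Win₁ Win₂ : (ℕ → V) → Prop} (h₁ : ∀ y, Win₁ y → Win y)
    (h₂ : ∀ y, Win₂ y → ¬ Win y) (hle : G.threshold Win₁ v + G.threshold Win₂ v ≤ 1) :
    G.IsThreshold Win v (G.threshold Win₁ v) := by
  refine ⟨fun B hB1 hB tb => ?_, fun B hB1 hB tb => ?_⟩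
  · obtain ⟨f1, hf1, hwin⟩ := (secures_of_threshold_lt hB hB1).exists_legal1
      ((G.threshold_mem_Icc Win₁ v).1.trans hB.le)
    exact ⟨f1, hf1, fun f2 hf2 => h₁ _ (hwin tb f2 hf2)⟩
  · have hB₂ : G.threshold Win₂ v < B := by linarith
    obtain ⟨f2, hf2, hwin⟩ := (secures_of_threshold_lt hB₂ hB1).exists_legal2
      ((G.threshold_mem_Icc Win₂ v).1.trans hB₂.le)
    exact ⟨f2, hf2, fun f1 hf1 => h₂ _ (hwin tb f1 hf1)⟩

end Thresholds

/-! ### Richman functions on strongly connected invariant sets -/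

section Richman

variable {V : Type} [Fintype V]

/-- The one-step operator of the random-turn game with weights `u`, whose solutions `f` of
`richStep u f = f + γ` are the (additive) Richman functions. -/
noncomputable def richStep (G : BiddingGame V) (u f : V → ℝ) (v : V) : ℝ :=
  u v + (G.maxSucc f v + G.minSucc f v) / 2

variable {G : BiddingGame V} {u f g : V → ℝ} {C : Set V} {v : V}

lemma richStep_le_add {c : ℝ} (h : ∀ a, G.E v a → f a ≤ g a + c) :
    G.richStep u f v ≤ G.richStep u g v + c := by
  obtain ⟨a, ha, hf⟩ := G.exists_eq_maxSucc f v
  obtain ⟨b, hb, hg⟩ := G.exists_eq_minSucc g v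
  unfold richStep
  linarith [h a ha, h b hb, le_maxSucc g ha, minSucc_le f hb]

lemma richStep_eq_add {c : ℝ} (h : ∀ a, G.E v a → f a = g a + c) :
    G.richStep u f v = G.richStep u g v + c := by
  refine le_antisymm (richStep_le_add fun a ha => (h a ha).le) ?_
  rw [← le_sub_iff_add_le, sub_eq_add_neg]
  exact richStep_le_add fun a ha => by linarith [h a ha]

lemma richStep_zero (G : BiddingGame V) (u : V → ℝ) : G.richStep u 0 = u := by
  funext v
  obtain ⟨a, -, ha⟩ := G.exists_eq_maxSucc 0 v
  obtain ⟨b, -, hb⟩ := G.exists_eq_minSucc 0 v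
  simp [richStep, ha, hb]

lemma richStep_neg (G : BiddingGame V) (u f : V → ℝ) : G.richStep (-u) (-f) = -G.richStep u f := by
  funext v
  obtain ⟨a, ha, hmax⟩ := G.exists_eq_maxSucc f v
  obtain ⟨b, hb, hmin⟩ := G.exists_eq_minSucc f v
  obtain ⟨c, hc, hmax_neg⟩ := G.exists_eq_maxSucc (-f) v
  obtain ⟨d, hd, hmin_neg⟩ := G.exists_eq_minSucc (-f) v
  have hca := le_maxSucc f hd
  have hcb := minSucc_le f hc
  have hda := minSucc_le (-f) ha
  have hdb := le_maxSucc (-f) hb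
  simp only [richStep, Pi.neg_apply] at *
  linarith

lemma lipschitzWith_richStep (G : BiddingGame V) (u : V → ℝ) :
    LipschitzWith 1 (G.richStep u) := by
  refine LipschitzWith.mk_one fun f g => (dist_pi_le_iff dist_nonneg).2 fun v => ?_
  have hle : ∀ f g : V → ℝ, G.richStep u f v ≤ G.richStep u g v + dist f g := fun f g =>
    richStep_le_add fun a _ => by
      linarith [le_abs_self (f a - g a), Real.dist_eq (f a) (g a), dist_le_pi_dist f g a]
  rw [Real.dist_eq, abs_le]
  constructor <;> linarith [hle f g, hle g f, dist_comm f g]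

lemma exists_richStep_eq_smul (G : BiddingGame V) (u : V → ℝ) {ε : ℝ} (hε : 0 < ε) :
    ∃ f, G.richStep u f = (1 + ε) • f ∧ ‖ε • f‖ ≤ ‖u‖ := by
  have hpos : 0 < 1 + ε := by linarith
  have hcontr : ContractingWith ‖(1 + ε)⁻¹‖₊ fun f => (1 + ε)⁻¹ • G.richStep u f := by
    refine ⟨?_, ?_⟩
    · rw [← NNReal.coe_lt_coe, coe_nnnorm, Real.norm_of_nonneg (by positivity)]
      exact inv_lt_one_of_one_lt₀ (by linarith)
    · have hlip := (lipschitzWith_smul (β := V → ℝ) (1 + ε)⁻¹).comp (G.lipschitzWith_richStep u)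
      rw [mul_one] at hlip
      exact hlip
  set f := hcontr.fixedPoint
  have hf : G.richStep u f = (1 + ε) • f :=
    (inv_smul_eq_iff₀ hpos.ne').1 hcontr.fixedPoint_isFixedPt
  refine ⟨f, hf, ?_⟩
  have hle : (1 + ε) * ‖f‖ ≤ ‖f‖ + ‖u‖ := by
    calc (1 + ε) * ‖f‖ = ‖G.richStep u f‖ := by rw [hf, norm_smul, Real.norm_of_nonneg hpos.le]
      _ ≤ ‖G.richStep u f - G.richStep u 0‖ + ‖G.richStep u 0‖ := norm_le_norm_sub_add _ _
      _ ≤ ‖f‖ + ‖u‖ := by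
        have := (G.lipschitzWith_richStep u).dist_le_mul f 0
        rw [dist_eq_norm, dist_zero_right, NNReal.coe_one, one_mul] at this
        rw [richStep_zero] at this ⊢
        gcongr
  rw [norm_smul, Real.norm_of_nonneg hε.le]
  linarith

lemma exists_sub_min_bound_of_reflTransGen (hC : G.IsInvariant C) (u : V → ℝ) (R : ℝ) {a b : V}
    (ha : a ∈ C) (hab : Relation.ReflTransGen G.E a b) :
    ∃ K, ∀ f : V → ℝ, (∀ v ∈ C, G.richStep u f v ≤ f v + R) → (∀ c ∈ C, f a ≤ f c) →
      f b - f a ≤ K := by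
  suffices b ∈ C ∧ ∃ K, ∀ f : V → ℝ, (∀ v ∈ C, G.richStep u f v ≤ f v + R) →
      (∀ c ∈ C, f a ≤ f c) → f b - f a ≤ K from this.2
  induction hab with
  | refl => exact ⟨ha, 0, fun f _ _ => (sub_self (f a)).le⟩
  | @tail c d _ hcd ih =>
    obtain ⟨hc, K, hK⟩ := ih
    -- Near its minimum, a supersolution cannot have a large value at any successor.
    refine ⟨hC c hc d hcd, 2 * K + 2 * (R - u c), fun f hf hmin => ?_⟩
    obtain ⟨e, he, hce⟩ := G.exists_eq_minSucc f c
    have hstep := hf c hc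
    unfold richStep at hstep
    linarith [hK f hf hmin, le_maxSucc f hcd, hmin e (hC c hc e he)]

lemma exists_oscillation_bound (hC : G.IsInvariant C)
    (hconn : ∀ v ∈ C, ∀ a ∈ C, Relation.ReflTransGen G.E v a) (u : V → ℝ) (R : ℝ) :
    ∃ K, ∀ f : V → ℝ, (∀ v ∈ C, G.richStep u f v ≤ f v + R) →
      ∀ v ∈ C, ∀ a ∈ C, f v - f a ≤ K := by
  have hpair : ∀ a ∈ C, ∀ b ∈ C, ∃ K, ∀ f : V → ℝ, (∀ v ∈ C, G.richStep u f v ≤ f v + R) →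
      (∀ c ∈ C, f a ≤ f c) → f b - f a ≤ K := fun a ha b hb =>
    exists_sub_min_bound_of_reflTransGen hC u R ha (hconn a ha b hb)
  choose! κ hκ using hpair
  obtain ⟨K, hK⟩ := Finite.bddAbove_range fun p : V × V => κ p.1 p.2
  refine ⟨K, fun f hf v hv a ha => ?_⟩
  obtain ⟨m, hm, hmin⟩ := Set.exists_min_image C f C.toFinite ⟨v, hv⟩
  calc f v - f a ≤ f v - f m := by linarith [hmin a ha]
    _ ≤ κ m v := hκ m hm v hv f hf hmin
    _ ≤ K := hK ⟨(m, v), rfl⟩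

lemma exists_richStep_eq_add_smul (hC : G.IsInvariant C) (hne : C.Nonempty)
    (hconn : ∀ v ∈ C, ∀ a ∈ C, Relation.ReflTransGen G.E v a) (u : V → ℝ) :
    ∃ K, ∀ ε > 0, ∃ (f : V → ℝ) (γ : ℝ), ‖f‖ ≤ K ∧ ‖γ‖ ≤ K ∧
      ∀ v ∈ C, G.richStep u f v = f v + γ + ε * f v := by
  obtain ⟨c, hc⟩ := hne
  have : Nonempty V := ⟨c⟩
  obtain ⟨K, hK⟩ := exists_oscillation_bound hC hconn u ‖u‖
  refine ⟨max K ‖u‖, fun ε hε => ?_⟩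
  obtain ⟨f, hf, hnorm⟩ := G.exists_richStep_eq_smul u hε
  have hbound : ∀ v, |ε * f v| ≤ ‖u‖ := fun v => (norm_le_pi_norm (ε • f) v).trans hnorm
  have hstep : ∀ v, G.richStep u f v = f v + ε * f v := fun v => by
    rw [hf, Pi.smul_apply, smul_eq_mul, one_add_mul]
  have hosc := hK f fun v _ => by linarith [hstep v, le_of_abs_le (hbound v)]
  let g : V → ℝ := C.indicator fun v => f v - f c
  have hg : ∀ v ∈ C, g v = f v - f c := fun v hv => Set.indicator_of_mem hv _
  refine ⟨g, ε * f c, ((pi_norm_le_iff_of_nonempty _).2 fun v => ?_).trans (le_max_left _ _),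
    (hbound c).trans (le_max_right _ _), fun v hv => ?_⟩
  · by_cases hv : v ∈ C
    · rw [hg v hv, Real.norm_eq_abs, abs_le]
      constructor <;> linarith [hosc v hv c hc, hosc c hc v hv]
    · rw [show g v = 0 from Set.indicator_of_notMem hv _, norm_zero]
      linarith [hosc c hc c hc]
  · rw [richStep_eq_add (c := -f c) fun a ha => (hg a (hC v hv a ha)).trans (sub_eq_add_neg _ _),
      hstep, hg v hv]
    ring

theorem exists_richStep_eq_add_const (hC : G.IsInvariant C) (hne : C.Nonempty)
    (hconn : ∀ v ∈ C, ∀ a ∈ C, Relation.ReflTransGen G.E v a) (u : V → ℝ) :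
    ∃ (f : V → ℝ) (γ : ℝ), ∀ v ∈ C, G.richStep u f v = f v + γ := by
  obtain ⟨K, hK⟩ := exists_richStep_eq_add_smul hC hne hconn u
  choose g κ hgK hκK hg using fun k : ℕ => hK (1 / ((k : ℝ) + 1)) Nat.one_div_pos_of_nat
  have hmem : ∀ k, (g k, κ k) ∈ Metric.closedBall (0 : (V → ℝ) × ℝ) K := fun k =>
    mem_closedBall_zero_iff.2 (norm_prod_le_iff.2 ⟨hgK k, hκK k⟩)
  obtain ⟨⟨f, γ⟩, -, φ, hφ, hlim⟩ := tendsto_subseq_of_bounded Metric.isBounded_closedBall hmem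
  refine ⟨f, γ, fun v hv => ?_⟩
  have hfst : Filter.Tendsto (fun k => g (φ k)) Filter.atTop (nhds f) := hlim.fst_nhds
  have happly : Filter.Tendsto (fun k => g (φ k) v) Filter.atTop (nhds (f v)) :=
    tendsto_pi_nhds.1 hfst v
  have hleft : Filter.Tendsto (fun k => G.richStep u (g (φ k)) v) Filter.atTop
      (nhds (G.richStep u f v)) :=
    tendsto_pi_nhds.1 (((G.lipschitzWith_richStep u).continuous.tendsto f).comp hfst) v
  have hright := (happly.add hlim.snd_nhds).add
    ((tendsto_one_div_add_atTop_nhds_zero_nat.comp hφ.tendsto_atTop).mul happly)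
  rw [zero_mul, add_zero] at hright
  exact tendsto_nhds_unique (hleft.congr fun k => hg (φ k) v hv) hright

end Richman

/-! ### Capital processes -/

section Capital

/-- The exponential supermartingale of Hoeffding's inequality for a walk that is at `φ` after `n`
steps of length at most `S`. -/
noncomputable def expCapital (l S : ℝ) (n : ℕ) (φ : ℝ) : ℝ :=
  Real.exp (l * φ - (l * S) ^ 2 / 2 * n)

/-- The wealth, from initial wealth `B`, of a gambler who bets on a walk with steps of length at
most `S`. Mixing the processes `expCapital l` over the rates `l = 1 / (k + 1)` makes the wealth
unbounded along every walk of positive upper speed. -/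
noncomputable def capital (B S : ℝ) (n : ℕ) (φ : ℝ) : ℝ :=
  ∑' k : ℕ, B / 2 / 2 ^ k * expCapital (1 / ((k : ℝ) + 1)) S n φ

variable {B S s φ ψ l : ℝ} {n : ℕ}

lemma expCapital_add_le (hs0 : 0 ≤ s) (hs : s ≤ S) (l φ : ℝ) (n : ℕ) :
    expCapital l S (n + 1) (φ - s) + expCapital l S (n + 1) (φ + s) ≤ 2 * expCapital l S n φ := by
  have hcosh : Real.cosh (l * s) ≤ Real.exp ((l * S) ^ 2 / 2) :=
    (Real.cosh_le_exp_half_sq _).trans <| Real.exp_le_exp.2 <| by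
      rw [mul_pow, mul_pow]
      gcongr
  calc expCapital l S (n + 1) (φ - s) + expCapital l S (n + 1) (φ + s)
      = 2 * (expCapital l S n φ * Real.exp (-((l * S) ^ 2 / 2)) * Real.cosh (l * s)) := by
        rw [Real.cosh_eq, mul_div_assoc', mul_div_cancel₀ _ two_ne_zero, mul_add]
        simp only [expCapital, ← Real.exp_add]
        push_cast
        rw [add_comm]
        congr 2 <;> ring
    _ ≤ 2 * (expCapital l S n φ * Real.exp (-((l * S) ^ 2 / 2)) *
          Real.exp ((l * S) ^ 2 / 2)) := by
        unfold expCapital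
        gcongr
    _ = 2 * expCapital l S n φ := by
        rw [mul_assoc, ← Real.exp_add, neg_add_cancel, Real.exp_zero, mul_one]

lemma expCapital_mono (hl : 0 ≤ l) (h : φ ≤ ψ) : expCapital l S n φ ≤ expCapital l S n ψ := by
  unfold expCapital
  gcongr

lemma expCapital_le (hl0 : 0 ≤ l) (hl : l ≤ 1) : expCapital l S n φ ≤ Real.exp |φ| := by
  refine Real.exp_le_exp.2 ?_
  calc l * φ - (l * S) ^ 2 / 2 * n ≤ l * φ := sub_le_self _ (by positivity)
    _ ≤ l * |φ| := by gcongr; exact le_abs_self φ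
    _ ≤ |φ| := mul_le_of_le_one_left (abs_nonneg φ) hl

lemma summable_capital (hB : 0 ≤ B) (S : ℝ) (n : ℕ) (φ : ℝ) :
    Summable fun k : ℕ => B / 2 / 2 ^ k * expCapital (1 / ((k : ℝ) + 1)) S n φ := by
  refine .of_nonneg_of_le (fun k => mul_nonneg (by positivity) (Real.exp_pos _).le) (fun k => ?_)
    ((summable_geometric_two' B).mul_right (Real.exp |φ|))
  gcongr
  exact expCapital_le (by positivity) (div_le_self zero_le_one (by simp))

lemma capital_zero_zero (B S : ℝ) : capital B S 0 0 = B := by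
  simp [capital, expCapital, tsum_geometric_two']

lemma capital_nonneg (hB : 0 ≤ B) : 0 ≤ capital B S n φ :=
  tsum_nonneg fun _ => mul_nonneg (by positivity) (Real.exp_pos _).le

lemma capital_mono (hB : 0 ≤ B) (h : φ ≤ ψ) : capital B S n φ ≤ capital B S n ψ := by
  refine (summable_capital hB S n φ).tsum_le_tsum (fun k => ?_) (summable_capital hB S n ψ)
  gcongr
  exact expCapital_mono (by positivity) h

lemma capital_add_le (hB : 0 ≤ B) (hs0 : 0 ≤ s) (hs : s ≤ S) (n : ℕ) (φ : ℝ) :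
    capital B S (n + 1) (φ - s) + capital B S (n + 1) (φ + s) ≤ 2 * capital B S n φ := by
  have hsub := summable_capital hB S (n + 1) (φ - s)
  have hadd := summable_capital hB S (n + 1) (φ + s)
  unfold capital
  rw [← hsub.tsum_add hadd, ← tsum_mul_left]
  refine (hsub.add hadd).tsum_le_tsum (fun k => ?_) ((summable_capital hB S n φ).mul_left 2)
  rw [← mul_add, mul_left_comm]
  gcongr
  exact expCapital_add_le hs0 hs _ φ n

lemma exists_le_add_mul_of_capital_le_one (hB : 0 < B) (S : ℝ) {η : ℝ} (hη : 0 < η) :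
    ∃ K, ∀ n φ, capital B S n φ ≤ 1 → φ ≤ K + η * n := by
  obtain ⟨k, hk⟩ := exists_nat_one_div_lt (show 0 < η / (S ^ 2 + 1) by positivity)
  set l : ℝ := 1 / ((k : ℝ) + 1)
  have hl : 0 < l := by positivity
  have hrate : l * S ^ 2 / 2 ≤ η := by
    rw [lt_div_iff₀ (by positivity)] at hk
    nlinarith [sq_nonneg S]
  refine ⟨-Real.log (B / 2 / 2 ^ k) / l, fun n φ hcap => ?_⟩
  have hterm : B / 2 / 2 ^ k * expCapital l S n φ ≤ 1 :=
    ((summable_capital hB.le S n φ).le_tsum k fun _ _ =>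
      mul_nonneg (by positivity) (Real.exp_pos _).le).trans hcap
  have hlog : Real.log (B / 2 / 2 ^ k) + (l * φ - (l * S) ^ 2 / 2 * n) ≤ 0 := by
    rw [← Real.log_exp (l * φ - _), ← Real.log_mul (by positivity) (Real.exp_ne_zero _)]
    exact Real.log_nonpos (mul_nonneg (by positivity) (Real.exp_pos _).le) hterm
  calc φ = (l * φ - (l * S) ^ 2 / 2 * n) / l + l * S ^ 2 / 2 * n := by field_simp; ring
    _ ≤ -Real.log (B / 2 / 2 ^ k) / l + η * n := by gcongr; linarith

/-- The bid that, if it wins, leaves a gambler with wealth `capital B S n φ` exactly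
`capital B S (n + 1) (φ - s)`. -/
noncomputable def capitalBid (B S : ℝ) (n : ℕ) (φ s : ℝ) : ℝ :=
  capital B S n φ - capital B S (n + 1) (φ - s)

lemma capitalBid_nonneg (hB : 0 ≤ B) (hs0 : 0 ≤ s) (hs : s ≤ S) :
    0 ≤ capitalBid B S n φ s := by
  have hmono : capital B S (n + 1) (φ - s) ≤ capital B S (n + 1) (φ + s) :=
    capital_mono hB (by linarith)
  unfold capitalBid
  linarith [capital_add_le hB hs0 hs n φ]

lemma capitalBid_le (hB : 0 ≤ B) : capitalBid B S n φ s ≤ capital B S n φ :=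
  sub_le_self _ (capital_nonneg hB)

lemma capital_le_sub_capitalBid (hB : 0 ≤ B) (hψ : ψ ≤ φ - s) :
    capital B S (n + 1) ψ ≤ capital B S n φ - capitalBid B S n φ s := by
  rw [capitalBid, sub_sub_cancel]
  exact capital_mono hB hψ

lemma capital_le_add_capitalBid (hB : 0 ≤ B) (hs0 : 0 ≤ s) (hs : s ≤ S) (hψ : ψ ≤ φ + s) :
    capital B S (n + 1) ψ ≤ capital B S n φ + capitalBid B S n φ s := by
  unfold capitalBid
  linarith [capital_add_le hB hs0 hs n φ, capital_mono (S := S) (n := n + 1) hB hψ]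

end Capital

/-! ### Strategies from potentials -/

section PotentialDefs

variable {V : Type}

/-- The weight accumulated along the past configurations `l`, corrected by the value of `f` at the
current configuration `c`. -/
def potential (u f : V → ℝ) (l : List (V × ℝ)) (c : V × ℝ) : ℝ :=
  (l.map fun d => u d.1).sum + f c.1

lemma potential_range_succ (u f : V → ℝ) (x : ℕ → V × ℝ) (n : ℕ) :
    potential u f ((List.range (n + 1)).map x) (x (n + 1)) =
      potential u f ((List.range n).map x) (x n) + (u (x n).1 + f (x (n + 1)).1 - f (x n).1) := by
  simp only [potential, List.range_succ, List.map_append, List.map_cons, List.map_nil,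
    List.sum_append, List.sum_singleton]
  ring

end PotentialDefs

section Potential

variable {V : Type} [Fintype V]

/-- Half the oscillation of `f` over the successors of `v`: a move from `v` changes a solution `f`
of `richStep u f = f` by `-u v` plus an amount within this distance of zero. -/
noncomputable def halfGap (G : BiddingGame V) (f : V → ℝ) (v : V) : ℝ :=
  (G.maxSucc f v - G.minSucc f v) / 2

/-- A successor of `v` at which `f` is smallest. -/
noncomputable def argminSucc (G : BiddingGame V) (f : V → ℝ) (v : V) : V :=
  (G.exists_eq_minSucc f v).choose

/-- The policy of a player who moves to a minimum of `f` and bids so that his budget stays above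
the capital of a gambler betting on the potential, whose initial value is `φ₀`. -/
noncomputable def capitalPolicy (G : BiddingGame V) (u f : V → ℝ) (B S φ₀ : ℝ) : Policy V :=
  fun l c => (capitalBid B S l.length (potential u f l c - φ₀) (G.halfGap f c.1),
    G.argminSucc f c.1)

/-- The average of `u` along `y` has upper limit at most zero. -/
def UpperMeanNonpos (u : V → ℝ) (y : ℕ → V) : Prop :=
  ∀ η > 0, ∃ K, ∀ n : ℕ, ∑ i ∈ Finset.range n, u (y i) ≤ K + η * n

variable {G : BiddingGame V} {u f : V → ℝ} {v a : V} {C : Set V} {σ : Policy V} {x : ℕ → V × ℝ}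
  {B S φ₀ : ℝ}

lemma halfGap_nonneg (G : BiddingGame V) (f : V → ℝ) (v : V) : 0 ≤ G.halfGap f v :=
  div_nonneg (sub_nonneg.2 (G.minSucc_le_maxSucc f v)) zero_le_two

lemma argminSucc_edge (G : BiddingGame V) (f : V → ℝ) (v : V) : G.E v (G.argminSucc f v) :=
  (G.exists_eq_minSucc f v).choose_spec.1

lemma minSucc_eq_argminSucc (G : BiddingGame V) (f : V → ℝ) (v : V) :
    G.minSucc f v = f (G.argminSucc f v) :=
  (G.exists_eq_minSucc f v).choose_spec.2

lemma add_argminSucc_le (h : G.richStep u f v ≤ f v) :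
    u v + f (G.argminSucc f v) ≤ f v - G.halfGap f v := by
  rw [← minSucc_eq_argminSucc G f v]
  unfold halfGap
  unfold richStep at h
  linarith

lemma add_succ_le (h : G.richStep u f v ≤ f v) (ha : G.E v a) :
    u v + f a ≤ f v + G.halfGap f v := by
  unfold halfGap
  unfold richStep at h
  linarith [le_maxSucc f ha]

lemma Consistent.mem_of_isInvariant (hx : G.Consistent σ x) (hC : G.IsInvariant C)
    (h0 : (x 0).1 ∈ C) (n : ℕ) : (x n).1 ∈ C := by
  induction n with
  | zero => exact h0
  | succ n ih => exact hC _ ih _ (hx.edge n)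

lemma Consistent.capital_le_budget (hx : G.Consistent (G.capitalPolicy u f B S φ₀) x)
    (hB : 0 ≤ B) (hS : ∀ v, G.halfGap f v ≤ S)
    (hf : ∀ n, G.richStep u f (x n).1 ≤ f (x n).1)
    (h0 : capital B S 0 (f (x 0).1 - φ₀) ≤ (x 0).2) (n : ℕ) :
    capital B S n (potential u f ((List.range n).map x) (x n) - φ₀) ≤ (x n).2 := by
  induction n with
  | zero => simpa [potential] using h0
  | succ n ih =>
    rw [potential_range_succ]
    set φ := potential u f ((List.range n).map x) (x n) - φ₀ with hφ
    set s := G.halfGap f (x n).1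
    have hs0 : 0 ≤ s := G.halfGap_nonneg f _
    have haction : G.action (G.capitalPolicy u f B S φ₀) x n =
        (capitalBid B S n φ s, G.argminSucc f (x n).1) := by
      unfold action capitalPolicy
      rw [List.length_map, List.length_range, ← hφ]
      exact legalize_eq_self (capitalBid_nonneg hB hs0 (hS _)) ((capitalBid_le hB).trans ih)
        (G.argminSucc_edge f _)
    have hstep := hx n
    rw [haction] at hstep
    rcases hstep with hwin | ⟨hE, hlose, -⟩
    · rw [hwin]
      refine (capital_le_sub_capitalBid hB (s := s) ?_).trans (sub_le_sub_right ih _)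
      linarith [add_argminSucc_le (hf n)]
    · refine ((capital_le_add_capitalBid hB hs0 (hS _) ?_).trans (add_le_add_left ih _)).trans hlose
      linarith [add_succ_le (hf n) hE]

theorem secures_upperMeanNonpos (hC : G.IsInvariant C)
    (hf : ∀ v ∈ C, G.richStep u f v ≤ f v) (hv : v ∈ C) (hB : 0 < B) (hB1 : B ≤ 1) :
    G.Secures (UpperMeanNonpos u) v B := by
  obtain ⟨S, hS⟩ := Finite.bddAbove_range (G.halfGap f)
  obtain ⟨M, hM⟩ := Finite.bddBelow_range f
  refine ⟨G.capitalPolicy u f B S (f v), fun x h0 hx η hη => ?_⟩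
  obtain ⟨K, hK⟩ := exists_le_add_mul_of_capital_le_one hB S hη
  refine ⟨K + (f v - M), fun n => ?_⟩
  have hmem := hx.mem_of_isInvariant hC (by rwa [h0])
  have hcap := hx.capital_le_budget hB.le (fun a => hS ⟨a, rfl⟩) (fun n => hf _ (hmem n))
    (by simp [h0, capital_zero_zero]) n
  have hpot := hK n _ (hcap.trans (hx.budget_mem (by simp [h0, hB.le, hB1]) n).2)
  have hsum : potential u f ((List.range n).map x) (x n) =
      ∑ i ∈ Finset.range n, u (x i).1 + f (x n).1 := by
    rw [potential, List.map_map]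
    rfl
  linarith [hM ⟨(x n).1, rfl⟩]

end Potential

/-! ### The mean-payoff objective -/

section MeanPayoff

variable {V : Type}

/-- The mean-payoff value of the outcome `y`, for real weights. -/
noncomputable def meanPayoff (w : V → ℝ) (y : ℕ → V) : ℝ :=
  Filter.liminf (fun n : ℕ => (∑ i ∈ Finset.range n, w (y i)) / n) Filter.atTop

/-- The lower limit of the averages of `w` along `y` is positive. -/
def LowerMeanPos (w : V → ℝ) (y : ℕ → V) : Prop :=
  ∃ δ > 0, UpperMeanNonpos (fun a => δ - w a) y

variable {w : V → ℝ} {y : ℕ → V}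

lemma UpperMeanNonpos.of_tail (h : UpperMeanNonpos w fun n => y (n + 1)) :
    UpperMeanNonpos w y := by
  intro η hη
  obtain ⟨K, hK⟩ := h η hη
  refine ⟨|K| + |w (y 0)|, fun n => ?_⟩
  cases n with
  | zero =>
    rw [Finset.range_zero, Finset.sum_empty]
    positivity
  | succ n =>
    rw [Finset.sum_range_succ']
    push_cast
    linarith [hK n, le_abs_self K, le_abs_self (w (y 0))]

lemma LowerMeanPos.of_tail (h : LowerMeanPos w fun n => y (n + 1)) : LowerMeanPos w y :=
  let ⟨δ, hδ, h⟩ := h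
  ⟨δ, hδ, h.of_tail⟩

variable [Finite V]

lemma exists_abs_average_le (w : V → ℝ) :
    ∃ W, ∀ (y : ℕ → V) (n : ℕ), |(∑ i ∈ Finset.range n, w (y i)) / n| ≤ W := by
  obtain ⟨W, hW⟩ := Finite.bddAbove_range fun a => |w a|
  refine ⟨max W 0, fun y n => ?_⟩
  rw [abs_div, Nat.abs_cast]
  refine div_le_of_le_mul₀ n.cast_nonneg (le_max_right _ _) ?_
  calc |∑ i ∈ Finset.range n, w (y i)| ≤ ∑ i ∈ Finset.range n, |w (y i)| :=
        Finset.abs_sum_le_sum_abs _ _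
    _ ≤ (Finset.range n).card • max W 0 :=
        Finset.sum_le_card_nsmul _ _ _ fun i _ => le_max_of_le_left (hW ⟨y i, rfl⟩)
    _ = max W 0 * n := by rw [Finset.card_range, nsmul_eq_mul, mul_comm]

lemma UpperMeanNonpos.meanPayoff_nonpos (h : UpperMeanNonpos w y) : meanPayoff w y ≤ 0 := by
  obtain ⟨W, hW⟩ := exists_abs_average_le w
  refine le_of_forall_pos_le_add fun ε hε => ?_
  obtain ⟨K, hK⟩ := h (ε / 2) (half_pos hε)
  refine Filter.liminf_le_of_frequently_le (Filter.Eventually.frequently ?_)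
    (Filter.isBoundedUnder_of ⟨-W, fun n => (abs_le.1 (hW y n)).1⟩)
  have hlim : ∀ᶠ n : ℕ in Filter.atTop, K / n < ε / 2 :=
    (tendsto_const_div_atTop_nhds_zero_nat K).eventually_lt_const (half_pos hε)
  filter_upwards [hlim, Filter.eventually_gt_atTop 0] with n hn hpos
  have hpos : (0 : ℝ) < n := Nat.cast_pos.2 hpos
  rw [div_lt_iff₀ hpos] at hn
  rw [div_le_iff₀ hpos]
  linarith [hK n]

lemma LowerMeanPos.meanPayoff_pos (h : LowerMeanPos w y) : 0 < meanPayoff w y := by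
  obtain ⟨W, hW⟩ := exists_abs_average_le w
  obtain ⟨δ, hδ, h⟩ := h
  obtain ⟨K, hK⟩ := h (δ / 3) (by positivity)
  refine (show 0 < δ / 3 by positivity).trans_le <| Filter.le_liminf_of_le
    (Filter.isBoundedUnder_of ⟨W, fun n => (abs_le.1 (hW y n)).2⟩).isCoboundedUnder_ge ?_
  have hlim : ∀ᶠ n : ℕ in Filter.atTop, K / n < δ / 3 :=
    (tendsto_const_div_atTop_nhds_zero_nat K).eventually_lt_const (by positivity)
  filter_upwards [hlim, Filter.eventually_gt_atTop 0] with n hn hpos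
  have hpos : (0 : ℝ) < n := Nat.cast_pos.2 hpos
  have hsum := hK n
  rw [Finset.sum_sub_distrib, Finset.sum_const, Finset.card_range, nsmul_eq_mul] at hsum
  rw [div_lt_iff₀ hpos] at hn
  rw [le_div_iff₀ hpos]
  linarith

end MeanPayoff

section Existence

variable {V : Type} [Fintype V] {G : BiddingGame V} {C : Set V}

/-- Which player wins with any positive budget is decided by the sign of the additive constant of
a Richman function. -/
lemma threshold_add_threshold_le_one_of_isInvariant (hC : G.IsInvariant C)
    (hconn : ∀ v ∈ C, ∀ a ∈ C, Relation.ReflTransGen G.E v a) (w : V → ℝ) {v : V} (hv : v ∈ C) :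
    G.threshold (UpperMeanNonpos w) v + G.threshold (LowerMeanPos w) v ≤ 1 := by
  obtain ⟨f, γ, hf⟩ := exists_richStep_eq_add_const hC ⟨v, hv⟩ hconn w
  rcases le_or_gt γ 0 with hγ | hγ
  · have hsuper : ∀ a ∈ C, G.richStep w f a ≤ f a := fun a ha => by linarith [hf a ha]
    have hmin : G.threshold (UpperMeanNonpos w) v ≤ 0 :=
      threshold_le (by simp) fun B hB hB1 =>
        secures_upperMeanNonpos hC hsuper hv hB hB1
    linarith [(G.threshold_mem_Icc (LowerMeanPos w) v).2]
  · have hneg : ∀ a ∈ C, G.richStep (fun b => γ - w b) (-f) a ≤ (-f) a := fun a ha => by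
      have hshift : G.richStep (fun b => γ - w b) (-f) a = γ + G.richStep (-w) (-f) a := by
        simp only [richStep, Pi.neg_apply]
        ring
      rw [hshift, richStep_neg, Pi.neg_apply, Pi.neg_apply, hf a ha]
      linarith
    have hmax : G.threshold (LowerMeanPos w) v ≤ 0 :=
      threshold_le (by simp) fun B hB hB1 =>
        (secures_upperMeanNonpos hC hneg hv hB hB1).mono fun y hy => ⟨γ, hγ, hy⟩
    linarith [(G.threshold_mem_Icc (UpperMeanNonpos w) v).2]

lemma threshold_add_threshold_le_one (G : BiddingGame V) (w : V → ℝ) (v : V) :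
    G.threshold (UpperMeanNonpos w) v + G.threshold (LowerMeanPos w) v ≤ 1 := by
  have : Nonempty V := ⟨v⟩
  obtain ⟨C, hne, hC, hmax⟩ := exists_isInvariant_forall_add_le
    (G.threshold_le_average fun _ => UpperMeanNonpos.of_tail (w := w))
    (G.threshold_le_average fun _ => LowerMeanPos.of_tail (w := w))
  obtain ⟨D, hDC, ⟨a, ha⟩, hD, hconn⟩ := hC.exists_stronglyConnected_subset hne
  exact (hmax a (hDC ha) v).trans (threshold_add_threshold_le_one_of_isInvariant hD hconn w ha)

lemma isThreshold_meanPayoff (G : BiddingGame V) (w : V → ℝ) (v : V) :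
    G.IsThreshold (fun y => meanPayoff w y ≤ 0) v (G.threshold (UpperMeanNonpos w) v) :=
  isThreshold_threshold (fun _ => UpperMeanNonpos.meanPayoff_nonpos)
    (fun _ h => h.meanPayoff_pos.not_ge) (G.threshold_add_threshold_le_one w v)

lemma isThreshold_meanPayoff_iff (G : BiddingGame V) (w : V → ℤ) (v : V) (t : ℝ) :
    G.IsThreshold (fun y => meanPayoff (fun a => (w a : ℝ)) y ≤ 0) v t ↔ IsThreshMP G w v t := by
  simp [IsThreshold, IsThreshMP, MinWinsFrom, MaxWinsFrom, mpval, energy, meanPayoff]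

end Existence

end BiddingGame

theorem mp_threshold_exists_unique_general
    {V : Type} [Fintype V] (G : BiddingGame V) (w : V → ℝ) :
    ∃! Thresh : V → ℝ, ∀ v : V, Thresh v ∈ Set.Icc (0 : ℝ) 1 ∧
      G.IsThreshold (fun y => BiddingGame.meanPayoff w y ≤ 0) v (Thresh v) := by
  refine ⟨G.threshold (BiddingGame.UpperMeanNonpos w), fun v =>
    ⟨G.threshold_mem_Icc _ v, G.isThreshold_meanPayoff w v⟩, fun t ht => funext fun v => ?_⟩
  exact (ht v).2.unique (G.isThreshold_meanPayoff w v) (ht v).1 (G.threshold_mem_Icc _ v)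

/-- In every mean-payoff bidding game, threshold budgets exist and
are unique: there is exactly one function `Thresh : V → [0,1]` such that from every
vertex `v`, Min guarantees a nonpositive mean-payoff value whenever his budget exceeds
`Thresh v` and Max guarantees a strictly positive mean-payoff value whenever his budget
exceeds `1 - Thresh v`. -/
theorem mp_threshold_exists_unique
    {V : Type} [Fintype V] (G : BiddingGame V) (w : V → ℤ) :
    ∃! Thresh : V → ℝ,
      ∀ v : V, Thresh v ∈ Set.Icc (0 : ℝ) 1 ∧ IsThreshMP G w v (Thresh v) := by
  simpa only [BiddingGame.isThreshold_meanPayoff_iff] using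
    mp_threshold_exists_unique_general G fun v => (w v : ℝ)
end
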